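/- arXiv:0809.3231 — 7 statements merged into one kernel-verified Lean document; each statement's English description precedes it below -/
import Mathlib

section
/- Fix constants C > 0, b > 0, η > 0 and wave speeds c₊ ∈ [1,2], c₋ ∈ [−2,−1]. There exist constants C̃ > 0 and ε₀ > 0 (depending only on C, b, η, c₊, c₋) such that for every ε ∈ (0, ε₀) and every N > 0 the following holds. Set a := ε^{3/2}. Suppose ρ, π : [0,N] → (ℤ → ℝ) are curves which, viewed as curves in each of the three Hilbert spaces ℓ²(ℤ), ℓ²(ℤ) with weight e^{2aj}, and ℓ²(ℤ) with weight e^{−2aj}, are differentiable, take values in the space, and satisfy ρ'(t) = (S−I)π(t) and π'(t) = (I−S⁻¹)ρ(t) + g(t) (with g(t) lying in all three spaces), together with ρ(0) = π(0) = 0. Define the time-dependent weighted norms ‖x‖_{+,t}² := Σ_{j∈ℤ} e^{2a(j − c₊N + c₊t)} x_j² and ‖x‖_{−,t}² := Σ_{j∈ℤ} e^{−2a(j − c₋N + c₋t)} x_j², and the energy E(t) := ½(‖ρ(t)‖² + ‖ρ(t)‖_{+,t}² + ‖ρ(t)‖_{−,t}² + ‖π(t)‖² + ‖π(t)‖_{+,t}²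 + ‖π(t)‖_{−,t}²). Assume the smallness condition: for all t ∈ [0,N], ‖g(t)‖·‖π(t)‖ + ‖g(t)‖_{+,t}·‖π(t)‖_{+,t} + ‖g(t)‖_{−,t}·‖π(t)‖_{−,t} ≤ C[(ε^{3/2} + E(t)^{1/2})E(t) + ε^{4+η} e^{−bε(N−t)}]. Then E(t) ≤ C̃ ε³ e^{−bε(N−t)} for all t ∈ [0,N]. -/
/-- The square of the `ℓ²(ℤ)` norm: `‖x‖² = Σ_j x_j²`. -/
noncomputable def sqSum (x : ℤ → ℝ) : ℝ := ∑' j : ℤ, (x j) ^ 2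

/-- The square of the weighted `ℓ²(ℤ)` norm with weight `e^{2a(j-θ)}`. -/
noncomputable def wSqSum (a θ : ℝ) (x : ℤ → ℝ) : ℝ :=
  ∑' j : ℤ, Real.exp (2 * a * ((j : ℝ) - θ)) * (x j) ^ 2

/-- The energy `E(t)` of the curve `(ρ,π)`: half the sum of the squares of the
`ℓ²(ℤ)` norms and the two moving-weight norms (weights `e^{±2a(j - c_±(N-t))}`)
of `ρ(t)` and `π(t)`. -/
noncomputable def fpuEnergy (a cp cm N : ℝ) (ρ π : ℝ → ℤ → ℝ) (t : ℝ) : ℝ :=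
  (1 / 2) * (sqSum (ρ t) + wSqSum a (cp * (N - t)) (ρ t) + wSqSum (-a) (cm * (N - t)) (ρ t)
    + sqSum (π t) + wSqSum a (cp * (N - t)) (π t) + wSqSum (-a) (cm * (N - t)) (π t))

/-!
For one weight `e^{2μ(j - c(N-t))}`, the weighted copies `R`, `P` of `ρ`, `π` satisfy
`R' = e^{-μ} S P - P` and `P' = R - e^{μ} S⁻¹ R + γ` in `ℓ²(ℤ)`, where `S` is unitary and `γ` is the
weighted copy of `g`. Hence the weighted energy grows at a rate of at most `2(μc + |sinh μ|)`, which
is `O(ε^{3/2})` for `μ ∈ {0, ±ε^{3/2}}`, plus the contribution of `g`. With `X = e^{-bε(N-t)}` the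
total energy thus satisfies `E' ≤ D((ε^{3/2} + √E)E + ε⁴X)`. It cannot cross the barrier `K ε³ X`:
on the barrier the right-hand side is at most `(D + O(√ε)) ε⁴ X`, while the barrier grows at the
rate `b K ε⁴ X`, which is larger once `bK > D` and `ε` is small.
-/

open Set
open Real (exp sinh exp_add exp_nat_mul sinh_eq abs_exp_sub_one_le sqrt_le_left sqrt_sq
  sq_sqrt)
open scoped InnerProductSpace

section Reindexing

variable {ι ι' E : Type*} [NormedAddCommGroup E] [NormedSpace ℝ E]

/-- Reindexing of square-summable families along a bijection `e`, as a linear isometric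
equivalence of `ℓ²` spaces; for `e = Equiv.addRight 1` on `ℤ` it is the shift operator `S`. -/
noncomputable def ellTwoReindex (e : ι ≃ ι') :
    lp (fun _ : ι' => E) 2 ≃ₗᵢ[ℝ] lp (fun _ : ι => E) 2 where
  toFun x := ⟨fun i => x (e i),
    memℓp_gen ((e.summable_iff (f := fun i => ‖x i‖ ^ _)).2 ((lp.memℓp x).summable (by norm_num)))⟩
  invFun x := ⟨fun i => x (e.symm i), memℓp_gen
    ((e.symm.summable_iff (f := fun i => ‖x i‖ ^ _)).2 ((lp.memℓp x).summable (by norm_num)))⟩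
  map_add' _ _ := rfl
  map_smul' _ _ := rfl
  left_inv x := by ext i; simp
  right_inv x := by ext i; simp
  norm_map' x := by
    have hp : 0 < (2 : ENNReal).toReal := by norm_num
    rw [lp.norm_eq_tsum_rpow hp, lp.norm_eq_tsum_rpow hp]
    exact congrArg (· ^ _) (e.tsum_eq fun i => ‖x i‖ ^ _)

@[simp]
theorem ellTwoReindex_apply (e : ι ≃ ι') (x : lp (fun _ : ι' => E) 2) (i : ι) :
    ellTwoReindex e x i = x (e i) := rfl

@[simp]
theorem ellTwoReindex_symm_apply (e : ι ≃ ι') (x : lp (fun _ : ι => E) 2) (i : ι') :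
    (ellTwoReindex e).symm x i = x (e.symm i) := rfl

end Reindexing

theorem lp_two_norm_sq_eq_tsum {ι : Type*} (x : lp (fun _ : ι => ℝ) 2) :
    ‖x‖ ^ 2 = ∑' i, x i ^ 2 := by
  simpa [sq_abs] using lp.norm_rpow_eq_tsum (p := 2) (by norm_num) x

theorem abs_sinh_le_two_mul_abs {x : ℝ} (hx : |x| ≤ 1) : |sinh x| ≤ 2 * |x| := by
  have hpos := abs_le.1 (abs_exp_sub_one_le hx)
  have hneg := abs_le.1 (abs_exp_sub_one_le (x := -x) (by rwa [abs_neg]))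
  rw [abs_neg] at hneg
  rw [sinh_eq, abs_le]
  constructor <;> linarith

theorem exists_forall_mem_Ioo_mul_sqrt_lt_one {B : ℝ} (hB : 0 ≤ B) :
    ∃ ε₀ > 0, ε₀ ≤ 1 ∧ ∀ ε ∈ Ioo 0 ε₀, B * √ε < 1 := by
  refine ⟨((B + 1)⁻¹) ^ 2, by positivity,
    pow_le_one₀ (by positivity) (inv_le_one_of_one_le₀ (by linarith)), fun ε hε => ?_⟩
  calc B * √ε ≤ B * (B + 1)⁻¹ := by gcongr; exact (sqrt_le_left (by positivity)).2 hε.2.le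
    _ < 1 := by rw [← div_eq_mul_inv, div_lt_one (by positivity)]; linarith

section InnerProduct

variable {H : Type*} [NormedAddCommGroup H] [InnerProductSpace ℝ H]

/- Since `S` is unitary, the cross terms combine to `-2 sinh μ ⟪r, S p⟫`: only the failure of the
weight to commute with the shift contributes. -/
theorem inner_add_inner_le_of_isometry (S : H ≃ₗᵢ[ℝ] H) (μ : ℝ) (r p γ : H) :
    ⟪r, exp (-μ) • S p - p⟫_ℝ + ⟪p, r - exp μ • S.symm r + γ⟫_ℝ
      ≤ |sinh μ| * (‖r‖ ^ 2 + ‖p‖ ^ 2) + ‖γ‖ * ‖p‖ := by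
  have expand : ⟪r, exp (-μ) • S p - p⟫_ℝ + ⟪p, r - exp μ • S.symm r + γ⟫_ℝ
      = 2 * -(sinh μ * ⟪r, S p⟫_ℝ) + ⟪γ, p⟫_ℝ := by
    rw [inner_add_right, inner_sub_right, inner_sub_right, inner_smul_right, inner_smul_right,
      ← S.inner_map_eq_flip p r, real_inner_comm r p, real_inner_comm r (S p),
      real_inner_comm γ p, sinh_eq]
    ring
  have cauchy_schwarz : |⟪r, S p⟫_ℝ| ≤ ‖r‖ * ‖p‖ := by
    simpa only [S.norm_map] using abs_real_inner_le_norm r (S p)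
  calc ⟪r, exp (-μ) • S p - p⟫_ℝ + ⟪p, r - exp μ • S.symm r + γ⟫_ℝ
      ≤ 2 * (|sinh μ| * (‖r‖ * ‖p‖)) + ‖γ‖ * ‖p‖ := by
        rw [expand]
        gcongr
        · exact (neg_le_abs _).trans (by rw [abs_mul]; gcongr)
        · exact real_inner_le_norm γ p
    _ = |sinh μ| * (2 * ‖r‖ * ‖p‖) + ‖γ‖ * ‖p‖ := by ring
    _ ≤ |sinh μ| * (‖r‖ ^ 2 + ‖p‖ ^ 2) + ‖γ‖ * ‖p‖ := by
        gcongr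
        exact two_mul_le_add_sq _ _

theorem hasDerivWithinAt_half_exp_mul_norm_sq_add_norm_sq {φ : ℝ → ℝ} {φ' t : ℝ} {s : Set ℝ}
    {R P : ℝ → H} {R' P' : H} (hφ : HasDerivWithinAt φ φ' s t)
    (hR : HasDerivWithinAt R R' s t) (hP : HasDerivWithinAt P P' s t) :
    HasDerivWithinAt (fun τ => 1 / 2 * (exp (φ τ) * (‖R τ‖ ^ 2 + ‖P τ‖ ^ 2)))
      (exp (φ t) * (φ' / 2 * (‖R t‖ ^ 2 + ‖P t‖ ^ 2) + (⟪R t, R'⟫_ℝ + ⟪P t, P'⟫_ℝ))) s t := by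
  refine ((hφ.exp.mul (hR.norm_sq.add hP.norm_sq)).const_mul (1 / 2)).congr_deriv ?_
  simp only [Pi.add_apply]
  ring

end InnerProduct

/-- `X` is the copy in `ℓ²(ℤ)` of `x`, regarded as a point of `ℓ²(ℤ)` with weight `e^{2μj}`. -/
def IsExpWeighted (μ : ℝ) (x : ℤ → ℝ) (X : lp (fun _ : ℤ => ℝ) 2) : Prop :=
  ∀ j : ℤ, X j = exp (μ * j) * x j

namespace IsExpWeighted

variable {μ : ℝ} {x y : ℤ → ℝ} {X Y : lp (fun _ : ℤ => ℝ) 2}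

theorem unique (hX : IsExpWeighted μ x X) (hY : IsExpWeighted μ x Y) : X = Y :=
  lp.ext <| funext fun j => (hX j).trans (hY j).symm

theorem sub (hX : IsExpWeighted μ x X) (hY : IsExpWeighted μ y Y) :
    IsExpWeighted μ (fun j => x j - y j) (X - Y) := fun j => by
  rw [lp.coeFn_sub, Pi.sub_apply, hX, hY, mul_sub]

theorem shift (hX : IsExpWeighted μ x X) :
    IsExpWeighted μ (fun j => x (j + 1))
      (exp (-μ) • ellTwoReindex (Equiv.addRight (1 : ℤ)) X) := fun j => by
  simp only [lp.coeFn_smul, Pi.smul_apply, ellTwoReindex_apply, Equiv.coe_addRight, smul_eq_mul]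
  rw [hX, ← mul_assoc, ← exp_add]
  push_cast
  ring_nf

theorem shift_symm (hX : IsExpWeighted μ x X) :
    IsExpWeighted μ (fun j => x (j - 1))
      (exp μ • (ellTwoReindex (Equiv.addRight (1 : ℤ))).symm X) := fun j => by
  simp only [lp.coeFn_smul, Pi.smul_apply, ellTwoReindex_symm_apply, Equiv.addRight_symm,
    Equiv.coe_addRight, ← sub_eq_add_neg, smul_eq_mul]
  rw [hX, ← mul_assoc, ← exp_add]
  push_cast
  ring_nf

theorem wSqSum_eq (hX : IsExpWeighted μ x X) (θ : ℝ) :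
    wSqSum μ θ x = exp (-(2 * μ * θ)) * ‖X‖ ^ 2 := by
  rw [lp_two_norm_sq_eq_tsum, wSqSum, ← tsum_mul_left]
  refine tsum_congr fun j => ?_
  rw [hX, mul_pow, ← exp_nat_mul, ← mul_assoc, ← exp_add]
  push_cast
  ring_nf

theorem sqrt_wSqSum_eq (hX : IsExpWeighted μ x X) (θ : ℝ) :
    √(wSqSum μ θ x) = exp (-(μ * θ)) * ‖X‖ := by
  rw [hX.wSqSum_eq, show -(2 * μ * θ) = (2 : ℕ) * -(μ * θ) by push_cast; ring, exp_nat_mul,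
    ← mul_pow, sqrt_sq (by positivity)]

end IsExpWeighted

theorem wSqSum_nonneg (μ θ : ℝ) (x : ℤ → ℝ) : 0 ≤ wSqSum μ θ x :=
  tsum_nonneg fun _ => by positivity

theorem wSqSum_zero_left (θ : ℝ) (x : ℤ → ℝ) : wSqSum 0 θ x = sqSum x := by
  simp [wSqSum, sqSum]

/-- The part of the energy carried by the single weight `e^{2μ(j - c(N-t))}`; the plain `ℓ²` norm
is the case `μ = 0`, for which the speed `c` is irrelevant. -/
noncomputable def movingWeightEnergy (μ c N : ℝ) (ρ π : ℝ → ℤ → ℝ) (t : ℝ) : ℝ :=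
  1 / 2 * (wSqSum μ (c * (N - t)) (ρ t) + wSqSum μ (c * (N - t)) (π t))

theorem movingWeightEnergy_nonneg (μ c N : ℝ) (ρ π : ℝ → ℤ → ℝ) (t : ℝ) :
    0 ≤ movingWeightEnergy μ c N ρ π t := by
  have hρ := wSqSum_nonneg μ (c * (N - t)) (ρ t)
  have hπ := wSqSum_nonneg μ (c * (N - t)) (π t)
  unfold movingWeightEnergy
  positivity

theorem fpuEnergy_eq_movingWeightEnergy_add (a cp cm N : ℝ) (ρ π : ℝ → ℤ → ℝ) :
    fpuEnergy a cp cm N ρ π = movingWeightEnergy 0 0 N ρ π + movingWeightEnergy a cp N ρ π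
      + movingWeightEnergy (-a) cm N ρ π := by
  ext t
  simp only [fpuEnergy, movingWeightEnergy, Pi.add_apply, wSqSum_zero_left]
  ring

theorem fpuEnergy_nonneg (a cp cm N : ℝ) (ρ π : ℝ → ℤ → ℝ) (t : ℝ) :
    0 ≤ fpuEnergy a cp cm N ρ π t := by
  rw [fpuEnergy_eq_movingWeightEnergy_add]
  exact add_nonneg (add_nonneg (movingWeightEnergy_nonneg ..) (movingWeightEnergy_nonneg ..))
    (movingWeightEnergy_nonneg ..)

theorem fpuEnergy_eq_zero {ρ π : ℝ → ℤ → ℝ} {t : ℝ} (hρ : ∀ j, ρ t j = 0) (hπ : ∀ j, π t j = 0)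
    (a cp cm N : ℝ) : fpuEnergy a cp cm N ρ π t = 0 := by
  simp [fpuEnergy, sqSum, wSqSum, hρ, hπ]

/-- On the time set `s`, the pair `(ρ, π)` is differentiable in `ℓ²(ℤ)` with weight `e^{2μj}` and
solves `ρ' = (S - I)π`, `π' = (I - S⁻¹)ρ + g` there. Here `R`, `P`, `R'`, `P'` are the copies in
`ℓ²(ℤ)` of `ρ`, `π` and of the two right-hand sides. -/
def IsWeightedWaveSolution (μ : ℝ) (s : Set ℝ) (ρ π g : ℝ → ℤ → ℝ)
    (R P R' P' : ℝ → lp (fun _ : ℤ => ℝ) 2) : Prop :=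
  ∀ t ∈ s, IsExpWeighted μ (ρ t) (R t) ∧ IsExpWeighted μ (π t) (P t) ∧
    IsExpWeighted μ (fun j => π t (j + 1) - π t j) (R' t) ∧
    IsExpWeighted μ (fun j => ρ t j - ρ t (j - 1) + g t j) (P' t) ∧
    HasDerivWithinAt R (R' t) s t ∧ HasDerivWithinAt P (P' t) s t

namespace IsWeightedWaveSolution

variable {μ t : ℝ} {s : Set ℝ} {ρ π g : ℝ → ℤ → ℝ} {R P R' P' : ℝ → lp (fun _ : ℤ => ℝ) 2}

theorem inner_add_inner_le (h : IsWeightedWaveSolution μ s ρ π g R P R' P') (ht : t ∈ s) :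
    ∃ γ, IsExpWeighted μ (g t) γ ∧ ⟪R t, R' t⟫_ℝ + ⟪P t, P' t⟫_ℝ
      ≤ |sinh μ| * (‖R t‖ ^ 2 + ‖P t‖ ^ 2) + ‖γ‖ * ‖P t‖ := by
  obtain ⟨hR, hP, hR', hP', -⟩ := h t ht
  set S := ellTwoReindex (E := ℝ) (Equiv.addRight (1 : ℤ))
  set γ := P' t - (R t - exp μ • S.symm (R t)) with hγ
  have hg : IsExpWeighted μ (g t) γ := by
    simpa only [add_sub_cancel_left] using hP'.sub (hR.sub hR.shift_symm)
  refine ⟨γ, hg, ?_⟩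
  have hR'_eq : R' t = exp (-μ) • S (P t) - P t := hR'.unique (hP.shift.sub hP)
  have hP'_eq : P' t = R t - exp μ • S.symm (R t) + γ := by rw [hγ, add_sub_cancel]
  rw [hR'_eq, hP'_eq]
  exact inner_add_inner_le_of_isometry S μ _ _ _

theorem movingWeightEnergy_eq (h : IsWeightedWaveSolution μ s ρ π g R P R' P') (ht : t ∈ s)
    (c N : ℝ) : movingWeightEnergy μ c N ρ π t
      = 1 / 2 * (exp (-(2 * μ * (c * (N - t)))) * (‖R t‖ ^ 2 + ‖P t‖ ^ 2)) := by
  obtain ⟨hR, hP, -⟩ := h t ht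
  rw [movingWeightEnergy, hR.wSqSum_eq, hP.wSqSum_eq, ← mul_add]

theorem exists_hasDerivWithinAt_movingWeightEnergy_le
    (h : IsWeightedWaveSolution μ s ρ π g R P R' P') (ht : t ∈ s) (c N : ℝ) :
    ∃ E', HasDerivWithinAt (movingWeightEnergy μ c N ρ π) E' s t ∧
      E' ≤ 2 * (μ * c + |sinh μ|) * movingWeightEnergy μ c N ρ π t
        + √(wSqSum μ (c * (N - t)) (g t)) * √(wSqSum μ (c * (N - t)) (π t)) := by
  obtain ⟨γ, hγ, hinner⟩ := h.inner_add_inner_le ht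
  obtain ⟨-, hP, -, -, hRd, hPd⟩ := h t ht
  have hφ : HasDerivWithinAt (fun τ => -(2 * μ * (c * (N - τ)))) (2 * (μ * c)) s t :=
    ((((hasDerivWithinAt_id t s).const_sub N).const_mul c).const_mul (2 * μ)).neg.congr_deriv
      (by ring)
  refine ⟨_, (hasDerivWithinAt_half_exp_mul_norm_sq_add_norm_sq hφ hRd hPd).congr
    (fun τ hτ => h.movingWeightEnergy_eq hτ c N) (h.movingWeightEnergy_eq ht c N), ?_⟩
  rw [h.movingWeightEnergy_eq ht, hγ.sqrt_wSqSum_eq, hP.sqrt_wSqSum_eq]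
  have hexp : exp (-(2 * μ * (c * (N - t)))) = exp (-(μ * (c * (N - t)))) ^ 2 := by
    rw [← exp_nat_mul]
    push_cast
    ring_nf
  rw [hexp]
  set φ := exp (-(μ * (c * (N - t))))
  calc φ ^ 2 * (2 * (μ * c) / 2 * (‖R t‖ ^ 2 + ‖P t‖ ^ 2) + (⟪R t, R' t⟫_ℝ + ⟪P t, P' t⟫_ℝ))
      ≤ φ ^ 2 * (2 * (μ * c) / 2 * (‖R t‖ ^ 2 + ‖P t‖ ^ 2)
          + (|sinh μ| * (‖R t‖ ^ 2 + ‖P t‖ ^ 2) + ‖γ‖ * ‖P t‖)) := by gcongr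
    _ = 2 * (μ * c + |sinh μ|) * (1 / 2 * (φ ^ 2 * (‖R t‖ ^ 2 + ‖P t‖ ^ 2)))
          + φ * ‖γ‖ * (φ * ‖P t‖) := by ring

end IsWeightedWaveSolution

/- Where `E` touches the barrier `F t = K ε³ e^{-bε(N-t)}`, we have `√E ≤ √K ε^{3/2}`, so the
growth rate of `E` is at most `(D K (1 + √K) √ε + D) ε⁴ e^{-bε(N-t)}`, less than `F' = b ε F`. -/
theorem le_exp_barrier_of_hasDerivWithinAt_le {E : ℝ → ℝ} {D K b ε N : ℝ}
    (hD : 0 ≤ D) (hK : 0 < K) (hε : 0 < ε) (hKb : D + 1 ≤ b * K)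
    (hsmall : D * K * (1 + √K) * √ε < 1)
    (hE0 : E 0 ≤ K * ε ^ 3 * exp (-(b * ε) * N))
    (hE : ∀ t ∈ Icc 0 N, ∃ E', HasDerivWithinAt E E' (Icc 0 N) t ∧
      E' ≤ D * ((ε ^ (3 / 2 : ℝ) + √(E t)) * E t + ε ^ 4 * exp (-(b * ε) * (N - t)))) :
    ∀ t ∈ Icc 0 N, E t ≤ K * ε ^ 3 * exp (-(b * ε) * (N - t)) := by
  have hb : 0 < b := pos_of_mul_pos_left (by linarith : 0 < b * K) hK.le
  choose! E' hE' hE'_le using hE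
  have hF (t : ℝ) : HasDerivAt (fun τ => K * ε ^ 3 * exp (-(b * ε) * (N - τ)))
      (b * K * (ε ^ 4 * exp (-(b * ε) * (N - t)))) t :=
    ((((hasDerivAt_id' t).const_sub N).const_mul (-(b * ε))).exp.const_mul
      (K * ε ^ 3)).congr_deriv (by ring)
  refine image_le_of_deriv_right_lt_deriv_boundary
    (fun t ht => (hE' t ht).continuousWithinAt)
    (fun t ht => (hE' t (Ico_subset_Icc_self ht)).mono_of_mem_nhdsWithin
      (Icc_mem_nhdsGE_of_mem ht)) (by rwa [sub_zero]) hF fun t ht hEt => ?_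
  refine (hE'_le t (Ico_subset_Icc_self ht)).trans_lt ?_
  have hX_le : exp (-(b * ε) * (N - t)) ≤ 1 :=
    Real.exp_le_one_iff.2 (mul_nonpos_of_nonpos_of_nonneg (neg_nonpos.2 (by positivity))
      (sub_nonneg.2 ht.2.le))
  set X := exp (-(b * ε) * (N - t))
  have hX : 0 < X := Real.exp_pos _
  have hrpow : ε ^ (3 / 2 : ℝ) = ε * √ε := by
    rw [show (3 / 2 : ℝ) = 1 + 1 / 2 by norm_num, Real.rpow_add hε, Real.rpow_one,
      Real.sqrt_eq_rpow]
  have hsqrt : √(E t) ≤ √K * (ε * √ε) := by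
    rw [Real.sqrt_le_left (by positivity), hEt, mul_pow, mul_pow, sq_sqrt hK.le, sq_sqrt hε.le]
    calc K * ε ^ 3 * X ≤ K * ε ^ 3 * 1 := by gcongr
      _ = K * (ε ^ 2 * ε) := by ring
  have hE_nonneg : 0 ≤ E t := by rw [hEt]; positivity
  calc D * ((ε ^ (3 / 2 : ℝ) + √(E t)) * E t + ε ^ 4 * X)
      ≤ D * ((ε * √ε + √K * (ε * √ε)) * E t + ε ^ 4 * X) := by rw [hrpow]; gcongr
    _ = (D * K * (1 + √K) * √ε + D) * (ε ^ 4 * X) := by rw [hEt]; ring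
    _ < b * K * (ε ^ 4 * X) := mul_lt_mul_of_pos_right (by linarith) (mul_pos (pow_pos hε 4) hX)

theorem two_mul_mul_add_abs_sinh_le {a μ c : ℝ} (ha : a ≤ 1) (hμ : |μ| ≤ a) :
    2 * (μ * c + |sinh μ|) ≤ 2 * (|c| + 2) * a := by
  have hsinh := abs_sinh_le_two_mul_abs (hμ.trans ha)
  have hμc : μ * c ≤ a * |c| := (le_abs_self _).trans (by rw [abs_mul]; gcongr)
  linarith

theorem exists_hasDerivWithinAt_fpuEnergy_le {a cp cm N t : ℝ} {s : Set ℝ}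
    {ρ π g : ℝ → ℤ → ℝ} {R P R' P' : ℝ → ℝ → lp (fun _ : ℤ => ℝ) 2} (ha0 : 0 ≤ a) (ha1 : a ≤ 1)
    (h : ∀ w ∈ ({-1, 0, 1} : Set ℝ),
      IsWeightedWaveSolution (w * a) s ρ π g (R w) (P w) (R' w) (P' w)) (ht : t ∈ s) :
    ∃ E', HasDerivWithinAt (fpuEnergy a cp cm N ρ π) E' s t ∧
      E' ≤ 2 * (|cp| + |cm| + 2) * a * fpuEnergy a cp cm N ρ π t
        + (√(sqSum (g t)) * √(sqSum (π t))
          + √(wSqSum a (cp * (N - t)) (g t)) * √(wSqSum a (cp * (N - t)) (π t))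
          + √(wSqSum (-a) (cm * (N - t)) (g t)) * √(wSqSum (-a) (cm * (N - t)) (π t))) := by
  have rate_le {μ c : ℝ} (hμ : |μ| ≤ a) (hc : |c| ≤ |cp| + |cm|) :
      2 * (μ * c + |sinh μ|) * movingWeightEnergy μ c N ρ π t
        ≤ 2 * (|cp| + |cm| + 2) * a * movingWeightEnergy μ c N ρ π t := by
    refine mul_le_mul_of_nonneg_right ((two_mul_mul_add_abs_sinh_le ha1 hμ).trans ?_)
      (movingWeightEnergy_nonneg ..)
    gcongr
  have h0 := h 0 (by simp)
  have hp := h 1 (by simp)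
  have hm := h (-1) (by simp)
  rw [zero_mul] at h0
  rw [one_mul] at hp
  rw [neg_one_mul] at hm
  obtain ⟨E₀', hE₀, hE₀_le⟩ := h0.exists_hasDerivWithinAt_movingWeightEnergy_le ht 0 N
  obtain ⟨Ep', hEp, hEp_le⟩ := hp.exists_hasDerivWithinAt_movingWeightEnergy_le ht cp N
  obtain ⟨Em', hEm, hEm_le⟩ := hm.exists_hasDerivWithinAt_movingWeightEnergy_le ht cm N
  rw [fpuEnergy_eq_movingWeightEnergy_add]
  refine ⟨E₀' + Ep' + Em', (hE₀.add hEp).add hEm, ?_⟩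
  have rate₀ := rate_le (μ := 0) (c := 0) (by simpa using ha0) (by rw [abs_zero]; positivity)
  have rate_p := rate_le (μ := a) (c := cp) (abs_of_nonneg ha0).le (by simp)
  have rate_m := rate_le (μ := -a) (c := cm) (by rw [abs_neg, abs_of_nonneg ha0]) (by simp)
  simp only [wSqSum_zero_left] at hE₀_le
  simp only [Pi.add_apply]
  linarith

theorem driven_discrete_wave_energy_estimate_general
    (C K₀ b η cp cm : ℝ) (hb : 0 < b) (hη : 0 ≤ η) :
    ∃ Ct > (0 : ℝ), ∃ ε₀ > (0 : ℝ), ∀ ε ∈ Ioo (0 : ℝ) ε₀, ∀ N : ℝ,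
      ∀ ρ π g : ℝ → ℤ → ℝ,
      ∀ R P R' P' : ℝ → ℝ → lp (fun _ : ℤ => ℝ) 2,
      (∀ w ∈ ({-1, 0, 1} : Set ℝ), IsWeightedWaveSolution (w * ε ^ ((3 : ℝ) / 2)) (Icc 0 N) ρ π g
        (R w) (P w) (R' w) (P' w)) →
      fpuEnergy (ε ^ ((3 : ℝ) / 2)) cp cm N ρ π 0 ≤ K₀ * ε ^ 3 * exp (-(b * ε) * N) →
      (∀ t ∈ Icc (0 : ℝ) N,
        √(sqSum (g t)) * √(sqSum (π t))
          + √(wSqSum (ε ^ ((3 : ℝ) / 2)) (cp * (N - t)) (g t))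
            * √(wSqSum (ε ^ ((3 : ℝ) / 2)) (cp * (N - t)) (π t))
          + √(wSqSum (-(ε ^ ((3 : ℝ) / 2))) (cm * (N - t)) (g t))
            * √(wSqSum (-(ε ^ ((3 : ℝ) / 2))) (cm * (N - t)) (π t))
        ≤ C * ((ε ^ ((3 : ℝ) / 2) + √(fpuEnergy (ε ^ ((3 : ℝ) / 2)) cp cm N ρ π t))
                * fpuEnergy (ε ^ ((3 : ℝ) / 2)) cp cm N ρ π t
            + ε ^ ((4 : ℝ) + η) * exp (-(b * ε) * (N - t)))) →
      ∀ t ∈ Icc (0 : ℝ) N,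
        fpuEnergy (ε ^ ((3 : ℝ) / 2)) cp cm N ρ π t
          ≤ Ct * ε ^ 3 * exp (-(b * ε) * (N - t)) := by
  set M := 2 * (|cp| + |cm| + 2)
  set D := M + |C|
  set K := max K₀ ((D + 1) / b)
  have hM : 0 ≤ M := by positivity
  have hD : 0 ≤ D := add_nonneg hM (abs_nonneg C)
  have hK : 0 < K := lt_max_of_lt_right (by positivity)
  obtain ⟨ε₀, hε₀, hε₀_le, hsmall⟩ :=
    exists_forall_mem_Ioo_mul_sqrt_lt_one (B := D * K * (1 + √K)) (by positivity)
  refine ⟨K, hK, ε₀, hε₀, fun ε hε N ρ π g R P R' P' hsol hE0 hg => ?_⟩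
  have hε1 : ε ≤ 1 := hε.2.le.trans hε₀_le
  have hε0 : 0 < ε := hε.1
  refine le_exp_barrier_of_hasDerivWithinAt_le hD hK hε0 ((div_le_iff₀' hb).1 (le_max_right ..))
    (hsmall ε hε) (hE0.trans (by gcongr; exact le_max_left ..)) fun t ht => ?_
  obtain ⟨E', hE', hE'_le⟩ := exists_hasDerivWithinAt_fpuEnergy_le (cp := cp) (cm := cm) (N := N)
    (by positivity) (Real.rpow_le_one hε0.le hε1 (by norm_num)) hsol ht
  refine ⟨E', hE', hE'_le.trans ?_⟩
  have hpow : ε ^ (4 + η) ≤ ε ^ 4 := by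
    simpa using Real.rpow_le_rpow_of_exponent_ge hε0 hε1 (le_add_of_nonneg_right hη : 4 ≤ 4 + η)
  set a := ε ^ ((3 : ℝ) / 2)
  set E := fpuEnergy a cp cm N ρ π t
  set X := exp (-(b * ε) * (N - t))
  have hE_nonneg : 0 ≤ E := fpuEnergy_nonneg ..
  have hlin : a * E ≤ (a + √E) * E + ε ^ 4 * X := by
    rw [add_mul, add_assoc]
    exact le_add_of_nonneg_right (by positivity)
  calc M * a * E + _ ≤ M * (a * E) + C * ((a + √E) * E + ε ^ (4 + η) * X) := by
        rw [← mul_assoc]; gcongr; exact hg t ht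
    _ ≤ M * ((a + √E) * E + ε ^ 4 * X) + |C| * ((a + √E) * E + ε ^ 4 * X) := by
        gcongr
        exact le_abs_self C
    _ = D * ((a + √E) * E + ε ^ 4 * X) := by ring

/-- Energy estimate for the discrete wave equation `ρ̇ = (S−I)π`, `π̇ = (I−S⁻¹)ρ + g`
driven from rest by a small inhomogeneous term `g`.  The curves `ρ, π` are required
to be differentiable as curves in each of the three Hilbert spaces `ℓ²(ℤ)`,
`ℓ²(e^{2aj})`, `ℓ²(e^{-2aj})` (`a = ε^{3/2}`); this is encoded by the `lp`-valued
curves `Rc w, Pc w` (the weighted copies of `ρ, π` for weight signs `w ∈ {-1,0,1}`)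
having derivatives `DRc w, DPc w` given by the weighted copies of `(S−I)π` and
`(I−S⁻¹)ρ + g`.  Under the smallness condition on `g`, the energy satisfies
`E(t) ≤ C̃ ε³ e^{-bε(N-t)}` on `[0,N]`. -/
theorem driven_discrete_wave_energy_estimate
    (C b η cp cm : ℝ) (hC : 0 < C) (hb : 0 < b) (hη : 0 < η)
    (hcp : cp ∈ Set.Icc (1 : ℝ) 2) (hcm : cm ∈ Set.Icc (-2 : ℝ) (-1)) :
    ∃ Ct > (0 : ℝ), ∃ ε₀ > (0 : ℝ), ∀ ε ∈ Set.Ioo (0 : ℝ) ε₀, ∀ N > (0 : ℝ),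
      ∀ ρ π g : ℝ → ℤ → ℝ,
      ∀ Rc Pc DRc DPc : ℝ → ℝ → lp (fun _ : ℤ => ℝ) 2,
      -- the `lp`-valued curves are the weighted copies of `ρ`, `π`, `(S-I)π`,
      -- `(I-S⁻¹)ρ + g` with weights `e^{w ε^{3/2} j}`, `w ∈ {-1,0,1}`,
      -- and the former are differentiable with the latter as derivatives:
      (∀ w ∈ ({-1, 0, 1} : Set ℝ), ∀ t ∈ Set.Icc (0 : ℝ) N,
        (∀ j : ℤ, Rc w t j = Real.exp (w * ε ^ ((3 : ℝ) / 2) * (j : ℝ)) * ρ t j) ∧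
        (∀ j : ℤ, Pc w t j = Real.exp (w * ε ^ ((3 : ℝ) / 2) * (j : ℝ)) * π t j) ∧
        (∀ j : ℤ, DRc w t j
            = Real.exp (w * ε ^ ((3 : ℝ) / 2) * (j : ℝ)) * (π t (j + 1) - π t j)) ∧
        (∀ j : ℤ, DPc w t j
            = Real.exp (w * ε ^ ((3 : ℝ) / 2) * (j : ℝ)) * (ρ t j - ρ t (j - 1) + g t j)) ∧
        HasDerivWithinAt (Rc w) (DRc w t) (Set.Icc (0 : ℝ) N) t ∧
        HasDerivWithinAt (Pc w) (DPc w t) (Set.Icc (0 : ℝ) N) t) →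
      -- `g(t)` lies in all three spaces:
      (∀ w ∈ ({-1, 0, 1} : Set ℝ), ∀ t ∈ Set.Icc (0 : ℝ) N,
        Summable fun j : ℤ => Real.exp (2 * w * ε ^ ((3 : ℝ) / 2) * (j : ℝ)) * (g t j) ^ 2) →
      -- the system starts from rest:
      (∀ j : ℤ, ρ 0 j = 0) → (∀ j : ℤ, π 0 j = 0) →
      -- smallness condition on `g`:
      (∀ t ∈ Set.Icc (0 : ℝ) N,
        Real.sqrt (sqSum (g t)) * Real.sqrt (sqSum (π t))
          + Real.sqrt (wSqSum (ε ^ ((3 : ℝ) / 2)) (cp * (N - t)) (g t))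
            * Real.sqrt (wSqSum (ε ^ ((3 : ℝ) / 2)) (cp * (N - t)) (π t))
          + Real.sqrt (wSqSum (-(ε ^ ((3 : ℝ) / 2))) (cm * (N - t)) (g t))
            * Real.sqrt (wSqSum (-(ε ^ ((3 : ℝ) / 2))) (cm * (N - t)) (π t))
        ≤ C * ((ε ^ ((3 : ℝ) / 2)
              + Real.sqrt (fpuEnergy (ε ^ ((3 : ℝ) / 2)) cp cm N ρ π t))
                * fpuEnergy (ε ^ ((3 : ℝ) / 2)) cp cm N ρ π t
            + ε ^ ((4 : ℝ) + η) * Real.exp (-(b * ε) * (N - t)))) →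
      -- conclusion: exponential energy estimate on `[0,N]`
      ∀ t ∈ Set.Icc (0 : ℝ) N,
        fpuEnergy (ε ^ ((3 : ℝ) / 2)) cp cm N ρ π t
          ≤ Ct * ε ^ 3 * Real.exp (-(b * ε) * (N - t)) := by
  obtain ⟨Ct, hCt, ε₀, hε₀, h⟩ :=
    driven_discrete_wave_energy_estimate_general C 0 b η cp cm hb hη.le
  exact ⟨Ct, hCt, ε₀, hε₀, fun ε hε N _ ρ π g Rc Pc DRc DPc hcurve _ hρ hπ =>
    h ε hε N ρ π g Rc Pc DRc DPc hcurve (by simp [fpuEnergy_eq_zero hρ hπ])⟩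
end

section
/- Let N > 0, let 0 < c < β, and let B ≥ 0. Suppose E : [0,N] → ℝ is continuous on [0,N], differentiable on (0,N), satisfies E(0) = 0, and satisfies the differential inequality E'(t) ≤ c·E(t) + B·e^{−β(N−t)} for all t ∈ (0,N). Then E(t) ≤ (B/(β−c))·e^{−β(N−t)} for all t ∈ [0,N]. -/
/-!
The forced linear equation `y' = c y + B e^{-β(N-t)}` has the particular solution
`B / (β - c) * e^{-β(N-t)}`. A subsolution lying below it at the left endpoint stays below it,
because the integrating factor `e^{-ct}` makes the scaled difference of the two antitone.
-/

open Set

section LinearComparison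

variable {D : Set ℝ} {f f' g g' A A' : ℝ → ℝ}

theorem antitoneOn_exp_neg_mul_of_hasDerivAt_le_mul (hD : Convex ℝ D)
    (hf : ContinuousOn f D) (hA : ContinuousOn A D)
    (hf' : ∀ x ∈ interior D, HasDerivAt f (f' x) x)
    (hA' : ∀ x ∈ interior D, HasDerivAt A (A' x) x)
    (hle : ∀ x ∈ interior D, f' x ≤ A' x * f x) :
    AntitoneOn (fun x ↦ Real.exp (-A x) * f x) D := by
  have hderiv : ∀ x ∈ interior D, HasDerivAt (fun x ↦ Real.exp (-A x) * f x)
      (Real.exp (-A x) * (f' x - A' x * f x)) x := fun x hx ↦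
    ((hA' x hx).fun_neg.exp.fun_mul (hf' x hx)).congr_deriv (by ring)
  exact antitoneOn_of_hasDerivWithinAt_nonpos hD (by fun_prop)
    (fun x hx ↦ (hderiv x hx).hasDerivWithinAt) fun x hx ↦
      mul_nonpos_of_nonneg_of_nonpos (Real.exp_nonneg _) (sub_nonpos.2 (hle x hx))

theorem le_of_hasDerivAt_sub_mul_le (hD : Convex ℝ D)
    (hf : ContinuousOn f D) (hg : ContinuousOn g D) (hA : ContinuousOn A D)
    (hf' : ∀ x ∈ interior D, HasDerivAt f (f' x) x)
    (hg' : ∀ x ∈ interior D, HasDerivAt g (g' x) x)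
    (hA' : ∀ x ∈ interior D, HasDerivAt A (A' x) x)
    (hle : ∀ x ∈ interior D, f' x - A' x * f x ≤ g' x - A' x * g x)
    {a x : ℝ} (ha : a ∈ D) (hx : x ∈ D) (hax : a ≤ x) (hfg : f a ≤ g a) : f x ≤ g x := by
  have hanti : AntitoneOn (fun x ↦ Real.exp (-A x) * (f x - g x)) D :=
    antitoneOn_exp_neg_mul_of_hasDerivAt_le_mul hD (hf.fun_sub hg) hA
      (fun x hx ↦ (hf' x hx).fun_sub (hg' x hx)) hA' fun x hx ↦ by linarith [hle x hx]
  have hscaled : Real.exp (-A x) * (f x - g x) ≤ 0 :=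
    calc Real.exp (-A x) * (f x - g x)
      _ ≤ Real.exp (-A a) * (f a - g a) := hanti ha hx hax
      _ ≤ 0 := mul_nonpos_of_nonneg_of_nonpos (Real.exp_nonneg _) (sub_nonpos.2 hfg)
  exact sub_nonpos.1 (nonpos_of_mul_nonpos_right hscaled (Real.exp_pos _))

end LinearComparison

theorem hasDerivAt_exponential_forcing_solution {c β : ℝ} (hcβ : c ≠ β) (N B t : ℝ) :
    HasDerivAt (fun t ↦ B / (β - c) * Real.exp (-β * (N - t)))
      (c * (B / (β - c) * Real.exp (-β * (N - t))) + B * Real.exp (-β * (N - t))) t := by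
  have hne : β - c ≠ 0 := sub_ne_zero.2 hcβ.symm
  have hexp : HasDerivAt (fun t ↦ Real.exp (-β * (N - t)))
      (Real.exp (-β * (N - t)) * (-β * -1)) t :=
    (((hasDerivAt_id' t).const_sub N).const_mul (-β)).exp
  refine (hexp.const_mul (B / (β - c))).congr_deriv ?_
  field_simp
  ring

theorem gronwall_exponential_forcing_general {a b N c β B : ℝ} (hcβ : c ≠ β) {E E' : ℝ → ℝ}
    (hcont : ContinuousOn E (Icc a b))
    (hderiv : ∀ t ∈ Ioo a b, HasDerivAt E (E' t) t)
    (hEa : E a ≤ B / (β - c) * Real.exp (-β * (N - a)))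
    (hineq : ∀ t ∈ Ioo a b, E' t ≤ c * E t + B * Real.exp (-β * (N - t))) :
    ∀ t ∈ Icc a b, E t ≤ B / (β - c) * Real.exp (-β * (N - t)) := by
  intro t ht
  rw [← interior_Icc] at hderiv hineq
  exact le_of_hasDerivAt_sub_mul_le (convex_Icc a b) hcont (by fun_prop) (by fun_prop) hderiv
    (fun s _ ↦ hasDerivAt_exponential_forcing_solution hcβ N B s)
    (fun s _ ↦ hasDerivAt_const_mul c) (fun s hs ↦ by linarith [hineq s hs])
    (left_mem_Icc.2 (ht.1.trans ht.2)) ht ht.1 hEa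

/-- Gronwall-type estimate for a scalar differential inequality with an
exponentially growing (in `t`) inhomogeneous term `e^{-β(N-t)}`. -/
theorem gronwall_exponential_forcing
    (N c β B : ℝ) (hN : 0 < N) (hc : 0 < c) (hcβ : c < β) (hB : 0 ≤ B)
    (E E' : ℝ → ℝ)
    (hcont : ContinuousOn E (Set.Icc 0 N))
    (hderiv : ∀ t ∈ Set.Ioo 0 N, HasDerivAt E (E' t) t)
    (hE0 : E 0 = 0)
    (hineq : ∀ t ∈ Set.Ioo 0 N, E' t ≤ c * E t + B * Real.exp (-β * (N - t))) :
    ∀ t ∈ Set.Icc 0 N, E t ≤ B / (β - c) * Real.exp (-β * (N - t)) :=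
  gronwall_exponential_forcing_general hcβ.ne hcont hderiv
    (hE0.trans_le (mul_nonneg (div_nonneg hB (sub_nonneg.2 hcβ.le)) (Real.exp_nonneg _))) hineq
end

section
/- Let f : ℝ → ℝ be three times continuously differentiable with f(0) = 0 and f'(0) = 0. Define G : ℝ² → ℝ by G(x,y) := (f(x+y) − f(x) − f(y))/(xy) when x ≠ 0 and y ≠ 0; G(0,y) := f'(y)/y when y ≠ 0; G(x,0) := f'(x)/x when x ≠ 0; and G(0,0) := f''(0). Then G is Lipschitz continuous on every bounded subset of ℝ². -/
/-- The second divided difference `(f(x+y) − f(x) − f(y))/(xy)`, extended by its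
limiting values where `x` or `y` vanishes (using `f(0) = f'(0) = 0`). -/
noncomputable def secondDividedDiff (f : ℝ → ℝ) (p : ℝ × ℝ) : ℝ :=
  if p.1 = 0 then
    if p.2 = 0 then deriv (deriv f) 0 else deriv f p.2 / p.2
  else if p.2 = 0 then deriv f p.1 / p.1
  else (f (p.1 + p.2) - f p.1 - f p.2) / (p.1 * p.2)

/-!
By the fundamental theorem of calculus, applied once in each variable,
`G(x, y) = ∫₀¹ ∫₀¹ f''(t y + s x) ds dt` everywhere, including on the axes. The integrand is locally
Lipschitz in `(x, y, s, t)`, and integrating out a variable over a compact interval preserves this.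
Hence `G` is locally Lipschitz, and so Lipschitz on compact sets.
-/

open MeasureTheory Topology

theorem exists_mem_nhds_forall_lipschitzOnWith_of_isCompact {α β γ : Type*}
    [PseudoEMetricSpace α] [PseudoEMetricSpace β] [PseudoEMetricSpace γ] {F : α × β → γ}
    (hF : LocallyLipschitz F) (x : α) {T : Set β} (hT : IsCompact T) :
    ∃ K, ∃ U ∈ 𝓝 x, ∀ t ∈ T, LipschitzOnWith K (fun y ↦ F (y, t)) U := by
  refine hT.induction_on ⟨0, Set.univ, Filter.univ_mem, by simp⟩ ?mono ?union ?nhds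
  case mono =>
    rintro S T hST ⟨K, U, hU, hK⟩
    exact ⟨K, U, hU, fun t ht ↦ hK t (hST ht)⟩
  case union =>
    rintro S T ⟨K, U, hU, hK⟩ ⟨L, V, hV, hL⟩
    refine ⟨max K L, U ∩ V, Filter.inter_mem hU hV, ?_⟩
    rintro t (ht | ht)
    · exact ((hK t ht).mono Set.inter_subset_left).weaken (le_max_left K L)
    · exact ((hL t ht).mono Set.inter_subset_right).weaken (le_max_right K L)
  case nhds =>
    intro t _
    obtain ⟨K, W, hW, hK⟩ := hF (x, t)
    obtain ⟨U, hU, V, hV, hUV⟩ := mem_nhds_prod_iff.1 hW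
    refine ⟨V, mem_nhdsWithin_of_mem_nhds hV, K, U, hU, fun u hu ↦ ?_⟩
    simpa only [mul_one, Function.comp_def] using hK.comp
      (LipschitzWith.prodMk_right u).lipschitzOnWith fun y hy ↦ hUV (Set.mk_mem_prod hy hu)

section IntervalIntegral

variable {α E : Type*} [PseudoMetricSpace α] [NormedAddCommGroup E] [NormedSpace ℝ E]

theorem lipschitzOnWith_intervalIntegral {F : α → ℝ → E} {s : Set α} {a b : ℝ} {K : NNReal}
    (hF : ∀ t ∈ Set.uIoc a b, LipschitzOnWith K (F · t) s)
    (hint : ∀ x ∈ s, IntervalIntegrable (F x) volume a b) :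
    LipschitzOnWith (K * nndist b a) (fun x ↦ ∫ t in a..b, F x t) s := by
  refine .of_dist_le_mul fun x hx y hy ↦ ?_
  calc dist (∫ t in a..b, F x t) (∫ t in a..b, F y t)
      = ‖∫ t in a..b, (F x t - F y t)‖ := by
        rw [dist_eq_norm, intervalIntegral.integral_sub (hint x hx) (hint y hy)]
    _ ≤ K * dist x y * |b - a| :=
        intervalIntegral.norm_integral_le_of_norm_le_const fun t ht ↦ by
          simpa only [dist_eq_norm] using (hF t ht).dist_le_mul x hx y hy
    _ = ↑(K * nndist b a) * dist x y := by
        rw [NNReal.coe_mul, coe_nndist, Real.dist_eq]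
        ring

theorem locallyLipschitz_intervalIntegral {F : α × ℝ → E} (hF : LocallyLipschitz F) (a b : ℝ) :
    LocallyLipschitz fun x ↦ ∫ t in a..b, F (x, t) := by
  intro x
  obtain ⟨K, U, hU, hK⟩ :=
    exists_mem_nhds_forall_lipschitzOnWith_of_isCompact hF x (isCompact_uIcc (a := a) (b := b))
  refine ⟨K * nndist b a, U, hU, lipschitzOnWith_intervalIntegral
    (fun t ht ↦ hK t (Set.uIoc_subset_uIcc ht)) fun y _ ↦ ?_⟩
  exact (hF.continuous.comp (.prodMk_right y)).intervalIntegrable a b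

end IntervalIntegral

section UnitInterval

variable {𝕜 : Type*} [RCLike 𝕜] {f : 𝕜 → 𝕜}

theorem integral_unitInterval_deriv_eq_div (hf : ContDiff 𝕜 1 f) (c : 𝕜) {h : 𝕜} (hh : h ≠ 0) :
    ∫ t in (0 : ℝ)..1, deriv f (c + t • h) = (f (c + h) - f c) / h := by
  have hcont : Continuous fun t : ℝ ↦ deriv f (c + t • h) :=
    (hf.continuous_deriv le_rfl).comp (by fun_prop)
  rw [eq_div_iff hh, mul_comm, ← smul_eq_mul]
  exact intervalIntegral.integral_unitInterval_deriv_eq_sub hcont.continuousOn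
    fun t _ ↦ (hf.differentiable one_ne_zero _).hasDerivAt

theorem integral_integral_unitInterval_deriv_deriv_eq_div (hf : ContDiff 𝕜 2 f) {x y : 𝕜}
    (hx : x ≠ 0) (hy : y ≠ 0) :
    ∫ t in (0 : ℝ)..1, ∫ s in (0 : ℝ)..1, deriv (deriv f) (t • y + s • x) =
      (f (x + y) - f x - f y + f 0) / (x * y) := by
  have hf₁ : ContDiff 𝕜 1 f := hf.of_le one_le_two
  have hf' : ContDiff 𝕜 1 (deriv f) := ContDiff.deriv' hf
  have hint (c : 𝕜) : IntervalIntegrable (fun t : ℝ ↦ deriv f (c + t • y)) volume 0 1 :=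
    (hf'.continuous.comp (by fun_prop)).intervalIntegrable 0 1
  calc ∫ t in (0 : ℝ)..1, ∫ s in (0 : ℝ)..1, deriv (deriv f) (t • y + s • x)
      = ∫ t in (0 : ℝ)..1, (deriv f (x + t • y) - deriv f (0 + t • y)) / x := by
        simp only [integral_unitInterval_deriv_eq_div hf' _ hx, zero_add, add_comm x]
    _ = ((∫ t in (0 : ℝ)..1, deriv f (x + t • y)) -
          ∫ t in (0 : ℝ)..1, deriv f (0 + t • y)) / x := by
        rw [intervalIntegral.integral_div, intervalIntegral.integral_sub (hint x) (hint 0)]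
    _ = (f (x + y) - f x - f y + f 0) / (x * y) := by
        rw [integral_unitInterval_deriv_eq_div hf₁ x hy,
          integral_unitInterval_deriv_eq_div hf₁ 0 hy, zero_add]
        field_simp
        ring

end UnitInterval

theorem secondDividedDiff_eq_integral {f : ℝ → ℝ} (hf : ContDiff ℝ 2 f) (hf0 : f 0 = 0)
    (hf'0 : deriv f 0 = 0) (p : ℝ × ℝ) :
    secondDividedDiff f p =
      ∫ t in (0 : ℝ)..1, ∫ s in (0 : ℝ)..1, deriv (deriv f) (t • p.2 + s • p.1) := by
  have hf' : ContDiff ℝ 1 (deriv f) := ContDiff.deriv' hf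
  obtain ⟨x, y⟩ := p
  have integral_axis (z : ℝ) (hz : z ≠ 0) :
      ∫ t in (0 : ℝ)..1, deriv (deriv f) (t • z) = deriv f z / z := by
    simpa only [zero_add, hf'0, sub_zero] using integral_unitInterval_deriv_eq_div hf' 0 hz
  rcases eq_or_ne x 0 with rfl | hx <;> rcases eq_or_ne y 0 with rfl | hy
  · simp [secondDividedDiff]
  · simp [secondDividedDiff, hy, ← integral_axis y hy]
  · simp [secondDividedDiff, hx, ← integral_axis x hx]
  · rw [integral_integral_unitInterval_deriv_deriv_eq_div hf hx hy]
    simp [secondDividedDiff, hx, hy, hf0]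

theorem locallyLipschitz_secondDividedDiff {f : ℝ → ℝ} (hf : ContDiff ℝ 2 f)
    (hf'' : LocallyLipschitz (deriv (deriv f))) (hf0 : f 0 = 0) (hf'0 : deriv f 0 = 0) :
    LocallyLipschitz (secondDividedDiff f) := by
  have integrand : LocallyLipschitz fun q : ((ℝ × ℝ) × ℝ) × ℝ ↦
      deriv (deriv f) (q.1.2 • q.1.1.2 + q.2 • q.1.1.1) :=
    hf''.comp (ContDiff.locallyLipschitz (𝕂 := ℝ) (by fun_prop))
  rw [funext (secondDividedDiff_eq_integral hf hf0 hf'0)]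
  exact locallyLipschitz_intervalIntegral (locallyLipschitz_intervalIntegral integrand 0 1) 0 1

theorem secondDividedDiff_lipschitzOn_bounded_general
    {f : ℝ → ℝ} (hf : ContDiff ℝ 2 f) (hf'' : LocallyLipschitz (deriv (deriv f)))
    (hf0 : f 0 = 0) (hf'0 : deriv f 0 = 0)
    {s : Set (ℝ × ℝ)} (hs : Bornology.IsBounded s) :
    ∃ K : NNReal, LipschitzOnWith K (secondDividedDiff f) s := by
  have hG := locallyLipschitz_secondDividedDiff hf hf'' hf0 hf'0
  obtain ⟨K, hK⟩ :=
    hG.locallyLipschitzOn.exists_lipschitzOnWith_of_compact hs.isCompact_closure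
  exact ⟨K, hK.mono subset_closure⟩

/-- If `f` is three times continuously differentiable with `f(0) = 0` and `f'(0) = 0`,
then the extended second divided difference `G(x,y)` is Lipschitz continuous on every
bounded subset of `ℝ²`. -/
theorem secondDividedDiff_lipschitzOn_bounded
    (f : ℝ → ℝ) (hf : ContDiff ℝ 3 f) (hf0 : f 0 = 0) (hf'0 : deriv f 0 = 0)
    (s : Set (ℝ × ℝ)) (hs : Bornology.IsBounded s) :
    ∃ K : NNReal, LipschitzOnWith K (secondDividedDiff f) s :=
  secondDividedDiff_lipschitzOn_bounded_general (hf.of_le (by norm_num))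
    (ContDiff.iterate_deriv' 1 2 hf).locallyLipschitz hf0 hf'0 hs
end

section
/- Let f : ℝ → ℝ be twice continuously differentiable with f(0) = 0 and f'(0) = 0. Define G : ℝ² → ℝ by G(x,y) := (f(x+y) − f(x) − f(y))/(xy) when x ≠ 0 and y ≠ 0; G(0,y) := f'(y)/y when y ≠ 0; G(x,0) := f'(x)/x when x ≠ 0; and G(0,0) := f''(0). Then G is continuous on ℝ², and for all (x,y) ∈ ℝ², |G(x,y)| ≤ sup_{|u| ≤ |x|+|y|} |f''(u)|. -/
section ParallelogramAverage

variable {E F : Type*} [NormedAddCommGroup F] [NormedSpace ℝ F] {g : E → F}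

/-- The average of `g` over the parallelogram with vertices `0`, `x`, `y`, `x + y`, in the
parametrization `(s, t) ↦ s • x + t • y` by the unit square. Degenerate parallelograms are allowed,
and their average is taken along the same parametrization. -/
noncomputable def parallelogramAverage [AddCommMonoid E] [Module ℝ E] (g : E → F) (x y : E) : F :=
  ∫ t in (0 : ℝ)..1, ∫ s in (0 : ℝ)..1, g (s • x + t • y)

theorem continuous_parallelogramAverage [AddCommMonoid E] [Module ℝ E] [TopologicalSpace E]
    [ContinuousAdd E] [ContinuousSMul ℝ E] (hg : Continuous g) :
    Continuous fun p : E × E ↦ parallelogramAverage g p.1 p.2 := by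
  unfold parallelogramAverage
  fun_prop

theorem norm_parallelogramAverage_le [SeminormedAddCommGroup E] [NormedSpace ℝ E] {x y : E} {C : ℝ}
    (hC : ∀ u ∈ Metric.closedBall 0 (‖x‖ + ‖y‖), ‖g u‖ ≤ C) : ‖parallelogramAverage g x y‖ ≤ C := by
  have norm_integral_le {h : ℝ → F} (hh : ∀ t ∈ Set.Ioc (0 : ℝ) 1, ‖h t‖ ≤ C) :
      ‖∫ t in (0 : ℝ)..1, h t‖ ≤ C := by
    rw [← Set.uIoc_of_le zero_le_one] at hh
    simpa using intervalIntegral.norm_integral_le_of_norm_le_const hh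
  have norm_smul_le_norm {r : ℝ} (hr : r ∈ Set.Ioc (0 : ℝ) 1) (z : E) : ‖r • z‖ ≤ ‖z‖ := by
    rw [norm_smul, Real.norm_of_nonneg hr.1.le]
    exact mul_le_of_le_one_left (norm_nonneg z) hr.2
  refine norm_integral_le fun t ht ↦ norm_integral_le fun s hs ↦ hC _ ?_
  exact mem_closedBall_zero_iff.2
    (norm_add_le_of_le (norm_smul_le_norm hs x) (norm_smul_le_norm ht y))

variable [CompleteSpace F]

theorem parallelogramAverage_zero_left [AddCommMonoid E] [Module ℝ E] (g : E → F) (y : E) :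
    parallelogramAverage g 0 y = ∫ t in (0 : ℝ)..1, g (t • y) := by
  simp [parallelogramAverage]

theorem parallelogramAverage_zero_right [AddCommMonoid E] [Module ℝ E] (g : E → F) (x : E) :
    parallelogramAverage g x 0 = ∫ s in (0 : ℝ)..1, g (s • x) := by
  simp [parallelogramAverage]

end ParallelogramAverage

section Deriv

variable {𝕜 F : Type*} [RCLike 𝕜] [NormedAddCommGroup F] [NormedSpace ℝ F] [NormedSpace 𝕜 F]
  [IsScalarTower ℝ 𝕜 F] [CompleteSpace F] {f f' f'' : 𝕜 → F}

theorem smul_integral_deriv_smul_add (hf : ∀ z, HasDerivAt f (f' z) z) (hf' : Continuous f')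
    (x z : 𝕜) : x • ∫ s in (0 : ℝ)..1, f' (s • x + z) = f (x + z) - f z := by
  simp_rw [add_comm _ z]
  exact intervalIntegral.integral_unitInterval_deriv_eq_sub (by fun_prop) fun _ _ ↦ hf _

theorem smul_integral_deriv_smul (hf : ∀ z, HasDerivAt f (f' z) z) (hf' : Continuous f')
    (x : 𝕜) : x • ∫ s in (0 : ℝ)..1, f' (s • x) = f x - f 0 := by
  simpa using smul_integral_deriv_smul_add hf hf' x 0

theorem smul_smul_parallelogramAverage_deriv_deriv (hf : ∀ z, HasDerivAt f (f' z) z)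
    (hf' : ∀ z, HasDerivAt f' (f'' z) z) (hf'' : Continuous f'') (x y : 𝕜) :
    y • x • parallelogramAverage f'' x y = f (x + y) - f x - f y + f 0 := by
  have hf'_cont : Continuous f' := continuous_iff_continuousAt.2 fun z ↦ (hf' z).continuousAt
  calc y • x • parallelogramAverage f'' x y
      = y • ∫ t in (0 : ℝ)..1, (f' (t • y + x) - f' (t • y)) := by
        rw [parallelogramAverage, ← intervalIntegral.integral_smul x]
        simp_rw [smul_integral_deriv_smul_add hf' hf'', add_comm x]
    _ = (f (y + x) - f x) - (f y - f 0) := by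
        rw [intervalIntegral.integral_sub (Continuous.intervalIntegrable (by fun_prop) _ _)
            (Continuous.intervalIntegrable (by fun_prop) _ _), smul_sub,
          smul_integral_deriv_smul_add hf hf'_cont, smul_integral_deriv_smul hf hf'_cont]
    _ = f (x + y) - f x - f y + f 0 := by
        rw [add_comm y x]
        abel

end Deriv

theorem secondDividedDiff_eq_parallelogramAverage {f : ℝ → ℝ} (hf : ContDiff ℝ 2 f) (hf0 : f 0 = 0)
    (hf'0 : deriv f 0 = 0) (x y : ℝ) :
    secondDividedDiff f (x, y) = parallelogramAverage (deriv (deriv f)) x y := by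
  have hderiv (z : ℝ) : HasDerivAt f (deriv f z) z :=
    (hf.differentiable two_ne_zero z).hasDerivAt
  have hderiv₂ (z : ℝ) : HasDerivAt (deriv f) (deriv (deriv f) z) z :=
    (hf.differentiable_deriv_two z).hasDerivAt
  have hcont : Continuous (deriv (deriv f)) := hf.deriv'.continuous_deriv_one
  have mul_integral_eq_deriv (z : ℝ) :
      z * ∫ s in (0 : ℝ)..1, deriv (deriv f) (s • z) = deriv f z := by
    simpa [hf'0] using smul_integral_deriv_smul hderiv₂ hcont z
  unfold secondDividedDiff
  split_ifs with hx hy hy <;> dsimp only at hx hy ⊢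
  · simp [hx, hy, parallelogramAverage_zero_left]
  · rw [hx, parallelogramAverage_zero_left, div_eq_iff hy, mul_comm, mul_integral_eq_deriv]
  · rw [hy, parallelogramAverage_zero_right, div_eq_iff hx, mul_comm, mul_integral_eq_deriv]
  · rw [div_eq_iff (mul_ne_zero hx hy)]
    have integral_repr := smul_smul_parallelogramAverage_deriv_deriv hderiv hderiv₂ hcont x y
    simp only [smul_eq_mul, hf0, add_zero] at integral_repr
    linear_combination -integral_repr

/-- If `f` is twice continuously differentiable with `f(0) = 0` and `f'(0) = 0`, then
the extended second divided difference `G` is continuous on `ℝ²` and satisfies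
`|G(x,y)| ≤ sup_{|u| ≤ |x|+|y|} |f''(u)|`. -/
theorem secondDividedDiff_continuous_and_bound
    (f : ℝ → ℝ) (hf : ContDiff ℝ 2 f) (hf0 : f 0 = 0) (hf'0 : deriv f 0 = 0) :
    Continuous (secondDividedDiff f) ∧
    ∀ x y : ℝ, |secondDividedDiff f (x, y)|
      ≤ sSup ((fun u => |deriv (deriv f) u|) '' Set.Icc (-(|x| + |y|)) (|x| + |y|)) := by
  have hcont : Continuous (deriv (deriv f)) := hf.deriv'.continuous_deriv_one
  have hG (x y : ℝ) : secondDividedDiff f (x, y) = parallelogramAverage (deriv (deriv f)) x y :=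
    secondDividedDiff_eq_parallelogramAverage hf hf0 hf'0 x y
  refine ⟨(continuous_parallelogramAverage hcont).congr fun p ↦ (hG p.1 p.2).symm, fun x y ↦ ?_⟩
  rw [hG, ← Real.norm_eq_abs]
  refine norm_parallelogramAverage_le fun u hu ↦ le_csSup ?_ (Set.mem_image_of_mem _ ?_)
  · exact (isCompact_Icc.image hcont.abs).bddAbove
  · simpa [Real.closedBall_eq_Icc] using hu
end

section
/- Let a ∈ (0,1], and let x, y : ℤ → ℝ be sequences with ‖x‖_a < ∞ and ‖y‖_a < ∞. Then ⟨x, (S−I)y⟩_a + ⟨y, (I−S⁻¹)x⟩_a = (1 − e^{2a})·⟨x, Sy⟩_a, and consequently |⟨x, (S−I)y⟩_a + ⟨y, (I−S⁻¹)x⟩_a| ≤ 2·sinh(a)·‖x‖_a·‖y‖_a ≤ 4a·‖x‖_a·‖y‖_a. -/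
/-! Since `⟨S⁻¹x, y⟩_a = e^{2a} ⟨x, Sy⟩_a`, the `⟨x, y⟩_a` terms of the two pairings cancel and
`(1 - e^{2a}) ⟨x, Sy⟩_a` is left. The map `x ↦ (e^{aj} x_j)` is an isometry onto `ℓ²`, which gives
the Cauchy–Schwarz inequality for `⟨·,·⟩_a`, and the shift scales the norm, `‖Sy‖_a = e^{-a} ‖y‖_a`;
so the constant is `|1 - e^{2a}| e^{-a} = 2 |sinh a|`. -/

open Real
open scoped InnerProductSpace

section Hilbert

variable {ι 𝕜 E : Type*} [RCLike 𝕜] [NormedAddCommGroup E] [InnerProductSpace 𝕜 E] {f g : ι → E}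

theorem memℓp_two_iff_summable_norm_sq : Memℓp f 2 ↔ Summable fun i => ‖f i‖ ^ 2 := by
  simpa using memℓp_gen_iff (E := fun _ : ι => E) (f := f) (p := 2) (by norm_num)

theorem summable_inner_of_summable_norm_sq (hf : Summable fun i => ‖f i‖ ^ 2)
    (hg : Summable fun i => ‖g i‖ ^ 2) : Summable fun i => ⟪f i, g i⟫_𝕜 :=
  lp.summable_inner (𝕜 := 𝕜) (⟨f, memℓp_two_iff_summable_norm_sq.2 hf⟩ : lp (fun _ : ι => E) 2)
    ⟨g, memℓp_two_iff_summable_norm_sq.2 hg⟩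

theorem norm_tsum_inner_le_sqrt_mul_sqrt (hf : Summable fun i => ‖f i‖ ^ 2)
    (hg : Summable fun i => ‖g i‖ ^ 2) :
    ‖∑' i, ⟪f i, g i⟫_𝕜‖ ≤ √(∑' i, ‖f i‖ ^ 2) * √(∑' i, ‖g i‖ ^ 2) := by
  let F : lp (fun _ : ι => E) 2 := ⟨f, memℓp_two_iff_summable_norm_sq.2 hf⟩
  let G : lp (fun _ : ι => E) 2 := ⟨g, memℓp_two_iff_summable_norm_sq.2 hg⟩
  have norm_eq (H : lp (fun _ : ι => E) 2) : ‖H‖ = √(∑' i, ‖H i‖ ^ 2) := by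
    simpa [sqrt_eq_rpow] using lp.norm_eq_tsum_rpow (p := 2) (by norm_num) H
  calc ‖∑' i, ⟪f i, g i⟫_𝕜‖ = ‖⟪F, G⟫_𝕜‖ := by rw [lp.inner_eq_tsum]
    _ ≤ ‖F‖ * ‖G‖ := norm_inner_le_norm F G
    _ = √(∑' i, ‖f i‖ ^ 2) * √(∑' i, ‖g i‖ ^ 2) := by rw [norm_eq, norm_eq]

end Hilbert

theorem abs_sinh_le_two_mul_abs_s10 {t : ℝ} (ht : |t| ≤ 1) : |sinh t| ≤ 2 * |t| := by
  have hneg : |exp (-t) - 1| ≤ 2 * |t| := by simpa using abs_exp_sub_one_le (x := -t) (by simpa)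
  calc |sinh t| = |(exp t - 1) - (exp (-t) - 1)| / 2 := by
        rw [sinh_eq, sub_sub_sub_cancel_right, abs_div, abs_two]
    _ ≤ (|exp t - 1| + |exp (-t) - 1|) / 2 := by gcongr; exact abs_sub _ _
    _ ≤ 2 * |t| := by linarith [abs_exp_sub_one_le ht]

theorem one_sub_exp_two_mul (t : ℝ) : 1 - exp (2 * t) = -(2 * sinh t * exp t) := by
  rw [sinh_eq, two_mul t, exp_add, exp_neg]
  field_simp
  ring

section WeightedSequences

variable {𝕜 E : Type*} [RCLike 𝕜] [NormedAddCommGroup E] {a : ℝ} {x y z : ℤ → E}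

/-- Finiteness of the weighted norm `‖x‖_a`. -/
def WeightedSummable (a : ℝ) (x : ℤ → E) : Prop :=
  Summable fun j : ℤ => exp (2 * a * j) * ‖x j‖ ^ 2

/-- The weighted norm `‖x‖_a`, with junk value `0` unless `WeightedSummable a x`. -/
noncomputable def weightedNorm (a : ℝ) (x : ℤ → E) : ℝ :=
  √(∑' j : ℤ, exp (2 * a * j) * ‖x j‖ ^ 2)

/-- The power `S ^ k` of the shift operator, for `k` of either sign. -/
def shift (k : ℤ) (x : ℤ → E) : ℤ → E := fun j => x (j + k)

theorem exp_mul_norm_sq_shift (k j : ℤ) :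
    exp (2 * a * j) * ‖shift k x j‖ ^ 2 =
      exp (-(2 * a * k)) * (exp (2 * a * (j + k : ℤ)) * ‖x (j + k)‖ ^ 2) := by
  rw [shift, ← mul_assoc, ← exp_add]
  push_cast
  ring_nf

theorem WeightedSummable.shift (hx : WeightedSummable a x) (k : ℤ) :
    WeightedSummable a (shift k x) := by
  simp only [WeightedSummable, exp_mul_norm_sq_shift]
  exact ((Equiv.addRight k).summable_iff.2 hx).mul_left _

theorem weightedNorm_shift (a : ℝ) (k : ℤ) (x : ℤ → E) :
    weightedNorm a (shift k x) = exp (-(a * k)) * weightedNorm a x := by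
  have reindex : ∑' j : ℤ, exp (2 * a * (j + k : ℤ)) * ‖x (j + k)‖ ^ 2 =
      ∑' j : ℤ, exp (2 * a * j) * ‖x j‖ ^ 2 :=
    (Equiv.addRight k).tsum_eq fun j : ℤ => exp (2 * a * j) * ‖x j‖ ^ 2
  have exp_sq : exp (-(2 * a * k)) = exp (-(a * k)) ^ 2 := by rw [← exp_nat_mul]; ring_nf
  simp only [weightedNorm, exp_mul_norm_sq_shift]
  rw [tsum_mul_left, reindex, exp_sq, sqrt_mul (sq_nonneg _), sqrt_sq (exp_nonneg _)]

theorem weightedNorm_real (a : ℝ) (x : ℤ → ℝ) :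
    weightedNorm a x = √(∑' j : ℤ, exp (2 * a * j) * x j ^ 2) := by
  simp only [weightedNorm, norm_eq_abs, sq_abs]

theorem norm_sq_exp_smul [NormedSpace 𝕜 E] (a : ℝ) (x : ℤ → E) (j : ℤ) :
    ‖(exp (a * j) : 𝕜) • x j‖ ^ 2 = exp (2 * a * j) * ‖x j‖ ^ 2 := by
  rw [norm_smul, RCLike.norm_ofReal, abs_exp, mul_pow, ← exp_nat_mul]
  push_cast
  rw [mul_assoc]

variable [InnerProductSpace 𝕜 E]

variable (𝕜) in
/-- The weighted inner product `⟨x, y⟩_a`, conjugate-linear in `x` as in Mathlib. -/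
noncomputable def weightedInner (a : ℝ) (x y : ℤ → E) : 𝕜 :=
  ∑' j : ℤ, (exp (2 * a * j) : 𝕜) * ⟪x j, y j⟫_𝕜

theorem weightedInner_real (a : ℝ) (x y : ℤ → ℝ) :
    weightedInner ℝ a x y = ∑' j : ℤ, exp (2 * a * j) * (x j * y j) := by
  simp only [weightedInner, RCLike.ofReal_real_eq_id, id_eq, RCLike.inner_apply, conj_trivial,
    mul_comm (x _)]

theorem inner_exp_smul_exp_smul (a : ℝ) (x y : ℤ → E) (j : ℤ) :
    ⟪(exp (a * j) : 𝕜) • x j, (exp (a * j) : 𝕜) • y j⟫_𝕜 =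
      (exp (2 * a * j) : 𝕜) * ⟪x j, y j⟫_𝕜 := by
  rw [inner_smul_left, inner_smul_right, RCLike.conj_ofReal, ← mul_assoc, ← RCLike.ofReal_mul,
    ← exp_add, mul_assoc 2, two_mul]

theorem WeightedSummable.summable_inner (hx : WeightedSummable a x) (hy : WeightedSummable a y) :
    Summable fun j : ℤ => (exp (2 * a * j) : 𝕜) * ⟪x j, y j⟫_𝕜 := by
  simp only [WeightedSummable, ← norm_sq_exp_smul (𝕜 := 𝕜)] at hx hy
  simpa only [inner_exp_smul_exp_smul] using summable_inner_of_summable_norm_sq (𝕜 := 𝕜) hx hy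

theorem norm_weightedInner_le (hx : WeightedSummable a x) (hy : WeightedSummable a y) :
    ‖weightedInner 𝕜 a x y‖ ≤ weightedNorm a x * weightedNorm a y := by
  simp only [WeightedSummable, ← norm_sq_exp_smul (𝕜 := 𝕜)] at hx hy
  simpa only [inner_exp_smul_exp_smul, norm_sq_exp_smul, weightedInner, weightedNorm] using
    norm_tsum_inner_le_sqrt_mul_sqrt (𝕜 := 𝕜) hx hy

theorem weightedInner_sub_left (hx : WeightedSummable a x) (hy : WeightedSummable a y)
    (hz : WeightedSummable a z) :
    weightedInner 𝕜 a (x - y) z = weightedInner 𝕜 a x z - weightedInner 𝕜 a y z := by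
  simp only [weightedInner, Pi.sub_apply, inner_sub_left, mul_sub]
  exact (hx.summable_inner (𝕜 := 𝕜) hz).tsum_sub (hy.summable_inner hz)

theorem weightedInner_sub_right (hx : WeightedSummable a x) (hy : WeightedSummable a y)
    (hz : WeightedSummable a z) :
    weightedInner 𝕜 a x (y - z) = weightedInner 𝕜 a x y - weightedInner 𝕜 a x z := by
  simp only [weightedInner, Pi.sub_apply, inner_sub_right, mul_sub]
  exact (hx.summable_inner (𝕜 := 𝕜) hy).tsum_sub (hx.summable_inner hz)

theorem weightedInner_shift_neg_left (a : ℝ) (k : ℤ) (x y : ℤ → E) :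
    weightedInner 𝕜 a (shift (-k) x) y =
      (exp (2 * (a * k)) : 𝕜) * weightedInner 𝕜 a x (shift k y) := by
  rw [weightedInner, weightedInner, ← tsum_mul_left, ← (Equiv.addRight k).tsum_eq]
  congr with j
  rw [← mul_assoc, ← RCLike.ofReal_mul, ← exp_add]
  simp only [shift, Equiv.coe_addRight, add_neg_cancel_right]
  push_cast
  ring_nf

theorem weightedInner_shift_sub_add_sub_shift (hx : WeightedSummable a x)
    (hy : WeightedSummable a y) (k : ℤ) :
    weightedInner 𝕜 a x (shift k y - y) + weightedInner 𝕜 a (x - shift (-k) x) y =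
      ((1 - exp (2 * (a * k)) : ℝ) : 𝕜) * weightedInner 𝕜 a x (shift k y) := by
  rw [weightedInner_sub_right hx (hy.shift k) hy, weightedInner_sub_left hx (hx.shift (-k)) hy,
    weightedInner_shift_neg_left]
  push_cast
  ring

theorem norm_one_sub_exp_mul_weightedInner_shift_le (hx : WeightedSummable a x)
    (hy : WeightedSummable a y) (k : ℤ) :
    ‖((1 - exp (2 * (a * k)) : ℝ) : 𝕜) * weightedInner 𝕜 a x (shift k y)‖ ≤
      2 * |sinh (a * k)| * weightedNorm a x * weightedNorm a y := by
  have exp_mul_exp_neg : exp (a * k) * exp (-(a * k)) = 1 := by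
    rw [← exp_add, add_neg_cancel, exp_zero]
  calc ‖((1 - exp (2 * (a * k)) : ℝ) : 𝕜) * weightedInner 𝕜 a x (shift k y)‖
      = 2 * |sinh (a * k)| * exp (a * k) * ‖weightedInner 𝕜 a x (shift k y)‖ := by
        rw [norm_mul, RCLike.norm_ofReal, one_sub_exp_two_mul, abs_neg, abs_mul, abs_mul, abs_two,
          abs_exp]
    _ ≤ 2 * |sinh (a * k)| * exp (a * k) * (weightedNorm a x * weightedNorm a (shift k y)) := by
        gcongr
        exact norm_weightedInner_le hx (hy.shift k)
    _ = 2 * |sinh (a * k)| * weightedNorm a x * weightedNorm a y := by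
        rw [weightedNorm_shift]
        linear_combination
          2 * |sinh (a * k)| * weightedNorm a x * weightedNorm a y * exp_mul_exp_neg

theorem weighted_shift_pairing_commutator_general (hx : WeightedSummable a x)
    (hy : WeightedSummable a y) (k : ℤ) :
    weightedInner 𝕜 a x (shift k y - y) + weightedInner 𝕜 a (x - shift (-k) x) y =
        ((1 - exp (2 * (a * k)) : ℝ) : 𝕜) * weightedInner 𝕜 a x (shift k y) ∧
      ‖weightedInner 𝕜 a x (shift k y - y) + weightedInner 𝕜 a (x - shift (-k) x) y‖ ≤
        2 * |sinh (a * k)| * weightedNorm a x * weightedNorm a y ∧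
      (|a * k| ≤ 1 → 2 * |sinh (a * k)| * weightedNorm a x * weightedNorm a y ≤
        4 * |a * k| * weightedNorm a x * weightedNorm a y) := by
  have commutator := weightedInner_shift_sub_add_sub_shift (𝕜 := 𝕜) hx hy k
  refine ⟨commutator, ?_, fun hak => ?_⟩
  · rw [commutator]
    exact norm_one_sub_exp_mul_weightedInner_shift_le hx hy k
  · have hx_nonneg : 0 ≤ weightedNorm a x := sqrt_nonneg _
    have hy_nonneg : 0 ≤ weightedNorm a y := sqrt_nonneg _
    gcongr ?_ * _ * _
    linarith [abs_sinh_le_two_mul_abs_s10 hak]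

end WeightedSequences

/-- In the weighted inner product `⟨x,y⟩_a = Σ_j e^{2aj} x_j y_j` with `a ∈ (0,1]`,
the skew-symmetrized pairing of the shift operators picks up a commutator term:
`⟨x,(S−I)y⟩_a + ⟨y,(I−S⁻¹)x⟩_a = (1 − e^{2a}) ⟨x, Sy⟩_a`, which is bounded by
`2 sinh(a) ‖x‖_a ‖y‖_a ≤ 4a ‖x‖_a ‖y‖_a`. -/
theorem weighted_shift_pairing_commutator
    (a : ℝ) (ha : a ∈ Set.Ioc (0 : ℝ) 1) (x y : ℤ → ℝ)
    (hx : Summable fun j : ℤ => Real.exp (2 * a * (j : ℝ)) * (x j) ^ 2)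
    (hy : Summable fun j : ℤ => Real.exp (2 * a * (j : ℝ)) * (y j) ^ 2) :
    (∑' j : ℤ, Real.exp (2 * a * (j : ℝ)) * (x j * (y (j + 1) - y j)))
        + (∑' j : ℤ, Real.exp (2 * a * (j : ℝ)) * (y j * (x j - x (j - 1))))
      = (1 - Real.exp (2 * a)) * ∑' j : ℤ, Real.exp (2 * a * (j : ℝ)) * (x j * y (j + 1)) ∧
    |(∑' j : ℤ, Real.exp (2 * a * (j : ℝ)) * (x j * (y (j + 1) - y j)))
        + (∑' j : ℤ, Real.exp (2 * a * (j : ℝ)) * (y j * (x j - x (j - 1))))|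
      ≤ 2 * Real.sinh a * Real.sqrt (∑' j : ℤ, Real.exp (2 * a * (j : ℝ)) * (x j) ^ 2)
          * Real.sqrt (∑' j : ℤ, Real.exp (2 * a * (j : ℝ)) * (y j) ^ 2) ∧
    2 * Real.sinh a * Real.sqrt (∑' j : ℤ, Real.exp (2 * a * (j : ℝ)) * (x j) ^ 2)
          * Real.sqrt (∑' j : ℤ, Real.exp (2 * a * (j : ℝ)) * (y j) ^ 2)
      ≤ 4 * a * Real.sqrt (∑' j : ℤ, Real.exp (2 * a * (j : ℝ)) * (x j) ^ 2)
          * Real.sqrt (∑' j : ℤ, Real.exp (2 * a * (j : ℝ)) * (y j) ^ 2) := by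
  have hx' : WeightedSummable a x := by simpa only [WeightedSummable, norm_eq_abs, sq_abs] using hx
  have hy' : WeightedSummable a y := by simpa only [WeightedSummable, norm_eq_abs, sq_abs] using hy
  simpa [weightedInner_real, weightedNorm_real, shift, ← sub_eq_add_neg, mul_comm (y _),
    abs_of_pos ha.1, abs_of_pos (sinh_pos_iff.2 ha.1), ha.2] using
    weighted_shift_pairing_commutator_general (𝕜 := ℝ) hx' hy' 1
end

section
/- There is an absolute constant C > 0 such that for every a ∈ (0,1], every c with 0 ≤ c ≤ a, and all real numbers p ≤ q, one has Σ_{j∈ℤ} e^{2c(j−q)} e^{−2a|j−p|} e^{−2a|j−q|} ≤ C·((q−p) + 1/a)·e^{−2a(q−p)}, and likewise Σ_{j∈ℤ} e^{−2c(j−p)} e^{−2a|j−p|} e^{−2a|j−q|} ≤ C·((q−p) + 1/a)·e^{−2a(q−p)}. -/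
/-!
Let `d(x)` be the distance from `x` to `[p, q]`. Then `|x - p| + |x - q| = (q - p) + 2 d(x)`, so the
product of the two profiles is `exp (-2a(q - p)) * exp (-4a d(x))`. Either weight is at most
`exp (2a d(x))`, hence uses up only half of the decay away from `[p, q]`, and it remains to sum
`exp (-2a d(j))`: going right from `⌈p⌉`, at most `q - p + 1` terms precede a geometric tail, and
going left there is only a geometric tail; each tail is at most `1 + 1 / (2a)`.
-/

open Real

/-- The distance from `x` to the interval `[p, q]` when `p ≤ q`, written as the sum of the
overshoots of `x` to the left of `p` and to the right of `q`, at most one of which is nonzero. -/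
def distIcc (p q x : ℝ) : ℝ := (p - x)⁺ + (x - q)⁺

section distIcc

variable (p q x : ℝ)

lemma distIcc_nonneg : 0 ≤ distIcc p q x :=
  add_nonneg (posPart_nonneg _) (posPart_nonneg _)

lemma left_sub_le_distIcc : p - x ≤ distIcc p q x :=
  (le_posPart _).trans (le_add_of_nonneg_right (posPart_nonneg _))

lemma sub_right_le_distIcc : x - q ≤ distIcc p q x :=
  (le_posPart _).trans (le_add_of_nonneg_left (posPart_nonneg _))

lemma abs_sub_add_abs_sub_eq : |x - p| + |x - q| = (q - p) + 2 * distIcc p q x := by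
  have abs_eq (y : ℝ) : |y| = 2 * y⁺ - y := by
    rw [eq_sub_iff_add_eq, abs_add_eq_two_nsmul_posPart, nsmul_eq_mul, Nat.cast_ofNat]
  rw [distIcc, abs_sub_comm x p, abs_eq (p - x), abs_eq (x - q)]
  ring

variable {p q x} in
lemma mul_le_mul_distIcc {a c y : ℝ} (hc : 0 ≤ c) (hca : c ≤ a) (hy : y ≤ distIcc p q x) :
    c * y ≤ a * distIcc p q x :=
  calc c * y ≤ c * distIcc p q x := by gcongr
    _ ≤ a * distIcc p q x := by gcongr; exact distIcc_nonneg p q x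

end distIcc

section GeometricSums

variable {b : ℝ}

lemma hasSum_exp_neg_mul_nat (hb : 0 < b) :
    HasSum (fun n : ℕ ↦ exp (-b * n)) (1 - exp (-b))⁻¹ := by
  simpa only [← exp_nat_mul, mul_comm] using
    hasSum_geometric_of_lt_one (exp_pos (-b)).le (exp_lt_one_iff.mpr (neg_lt_zero.mpr hb))

lemma inv_one_sub_exp_neg_le (hb : 0 < b) : (1 - exp (-b))⁻¹ ≤ 1 + 1 / b := by
  have exp_neg_le : exp (-b) ≤ (1 + b)⁻¹ := by
    rw [exp_neg]
    gcongr
    linarith [add_one_le_exp b]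
  refine inv_le_of_inv_le₀ (by positivity) ?_
  calc (1 + 1 / b)⁻¹ = 1 - (1 + b)⁻¹ := by field_simp; ring
    _ ≤ 1 - exp (-b) := by gcongr

variable {ℓ : ℝ}

lemma exp_neg_mul_posPart_add_floor_sub_le (hb : 0 ≤ b) (k : ℕ) :
    exp (-b * ((k + (⌊ℓ⌋₊ + 1) : ℕ) - ℓ)⁺) ≤ exp (-b * k) := by
  have floor_lt : ℓ < ⌊ℓ⌋₊ + 1 := Nat.lt_floor_add_one ℓ
  have le_overshoot : (k : ℝ) ≤ ((k + (⌊ℓ⌋₊ + 1) : ℕ) - ℓ)⁺ :=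
    le_trans (by push_cast; linarith) (le_posPart _)
  simp only [exp_le_exp, neg_mul, neg_le_neg_iff]
  gcongr

lemma summable_exp_neg_mul_posPart_nat_sub (hb : 0 < b) :
    Summable fun n : ℕ ↦ exp (-b * (n - ℓ)⁺) :=
  (summable_nat_add_iff (⌊ℓ⌋₊ + 1)).mp <| (hasSum_exp_neg_mul_nat hb).summable.of_nonneg_of_le
    (fun _ ↦ (exp_pos _).le) (exp_neg_mul_posPart_add_floor_sub_le hb.le)

lemma tsum_exp_neg_mul_posPart_nat_sub_le (hb : 0 < b) (hℓ : 0 ≤ ℓ) :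
    ∑' n : ℕ, exp (-b * (n - ℓ)⁺) ≤ (ℓ + 1) + (1 - exp (-b))⁻¹ := by
  have hsum := summable_exp_neg_mul_posPart_nat_sub (ℓ := ℓ) hb
  rw [← hsum.sum_add_tsum_nat_add (⌊ℓ⌋₊ + 1)]
  gcongr
  · calc ∑ n ∈ Finset.range (⌊ℓ⌋₊ + 1), exp (-b * (n - ℓ)⁺)
          ≤ ∑ _n ∈ Finset.range (⌊ℓ⌋₊ + 1), (1 : ℝ) := by
          gcongr with n
          rw [exp_le_one_iff, neg_mul, neg_nonpos]
          exact mul_nonneg hb.le (posPart_nonneg _)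
      _ = ⌊ℓ⌋₊ + 1 := by simp
      _ ≤ ℓ + 1 := by gcongr; exact Nat.floor_le hℓ
  · rw [← (hasSum_exp_neg_mul_nat hb).tsum_eq]
    exact ((summable_nat_add_iff _).mpr hsum).tsum_le_tsum
      (exp_neg_mul_posPart_add_floor_sub_le hb.le) (hasSum_exp_neg_mul_nat hb).summable

end GeometricSums

section IntegerSums

variable {b : ℝ} (p q : ℝ)

lemma exp_neg_mul_distIcc_add_ceil_le (hb : 0 ≤ b) (n : ℕ) :
    exp (-b * distIcc p q ((n + ⌈p⌉ : ℤ) : ℝ)) ≤ exp (-b * (n - (q - p))⁺) := by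
  have overshoot_le : ((n : ℝ) - (q - p))⁺ ≤ distIcc p q ((n + ⌈p⌉ : ℤ) : ℝ) := by
    refine sup_le (le_trans ?_ (sub_right_le_distIcc p q _)) (distIcc_nonneg p q _)
    push_cast
    linarith [Int.le_ceil p]
  simp only [exp_le_exp, neg_mul, neg_le_neg_iff]
  gcongr

lemma exp_neg_mul_distIcc_neg_add_ceil_le (hb : 0 ≤ b) (n : ℕ) :
    exp (-b * distIcc p q ((-(n + 1) + ⌈p⌉ : ℤ) : ℝ)) ≤ exp (-b * n) := by
  have le_dist : (n : ℝ) ≤ distIcc p q ((-(n + 1) + ⌈p⌉ : ℤ) : ℝ) := by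
    refine le_trans ?_ (left_sub_le_distIcc p q _)
    push_cast
    linarith [Int.ceil_lt_add_one p]
  simp only [exp_le_exp, neg_mul, neg_le_neg_iff]
  gcongr

lemma summable_exp_neg_mul_distIcc_add_ceil (hb : 0 < b) :
    Summable fun n : ℕ ↦ exp (-b * distIcc p q ((n + ⌈p⌉ : ℤ) : ℝ)) :=
  (summable_exp_neg_mul_posPart_nat_sub hb).of_nonneg_of_le (fun _ ↦ (exp_pos _).le)
    (exp_neg_mul_distIcc_add_ceil_le p q hb.le)

lemma summable_exp_neg_mul_distIcc_neg_add_ceil (hb : 0 < b) :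
    Summable fun n : ℕ ↦ exp (-b * distIcc p q ((-(n + 1) + ⌈p⌉ : ℤ) : ℝ)) :=
  (hasSum_exp_neg_mul_nat hb).summable.of_nonneg_of_le (fun _ ↦ (exp_pos _).le)
    (exp_neg_mul_distIcc_neg_add_ceil_le p q hb.le)

lemma summable_exp_neg_mul_distIcc (hb : 0 < b) :
    Summable fun j : ℤ ↦ exp (-b * distIcc p q j) :=
  (Equiv.addRight ⌈p⌉).summable_iff.mp <|
    .of_nat_of_neg_add_one (summable_exp_neg_mul_distIcc_add_ceil p q hb)
      (summable_exp_neg_mul_distIcc_neg_add_ceil p q hb)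

variable {p q}

lemma tsum_exp_neg_mul_distIcc_le (hb : 0 < b) (hpq : p ≤ q) :
    ∑' j : ℤ, exp (-b * distIcc p q j) ≤ (q - p) + 3 + 2 / b := by
  have right_summable := summable_exp_neg_mul_distIcc_add_ceil p q hb
  have left_summable := summable_exp_neg_mul_distIcc_neg_add_ceil p q hb
  have right_le : ∑' n : ℕ, exp (-b * distIcc p q ((n + ⌈p⌉ : ℤ) : ℝ)) ≤
      (q - p + 1) + (1 - exp (-b))⁻¹ :=
    (right_summable.tsum_le_tsum (exp_neg_mul_distIcc_add_ceil_le p q hb.le)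
      (summable_exp_neg_mul_posPart_nat_sub hb)).trans
      (tsum_exp_neg_mul_posPart_nat_sub_le hb (sub_nonneg.mpr hpq))
  have left_le : ∑' n : ℕ, exp (-b * distIcc p q ((-(n + 1) + ⌈p⌉ : ℤ) : ℝ)) ≤
      (1 - exp (-b))⁻¹ :=
    hasSum_le (exp_neg_mul_distIcc_neg_add_ceil_le p q hb.le) left_summable.hasSum
      (hasSum_exp_neg_mul_nat hb)
  calc ∑' j : ℤ, exp (-b * distIcc p q j)
      = ∑' j : ℤ, exp (-b * distIcc p q ((j + ⌈p⌉ : ℤ) : ℝ)) :=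
        ((Equiv.addRight ⌈p⌉).tsum_eq fun j : ℤ ↦ exp (-b * distIcc p q j)).symm
    _ = ∑' n : ℕ, exp (-b * distIcc p q ((n + ⌈p⌉ : ℤ) : ℝ)) +
          ∑' n : ℕ, exp (-b * distIcc p q ((-(n + 1) + ⌈p⌉ : ℤ) : ℝ)) :=
        tsum_of_nat_of_neg_add_one (f := fun j : ℤ ↦ exp (-b * distIcc p q ((j + ⌈p⌉ : ℤ) : ℝ)))
          right_summable left_summable
    _ ≤ (q - p) + 1 + 2 * (1 - exp (-b))⁻¹ := by linarith
    _ ≤ (q - p) + 1 + 2 * (1 + 1 / b) := by gcongr; exact inv_one_sub_exp_neg_le hb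
    _ = (q - p) + 3 + 2 / b := by ring

end IntegerSums

section Overlap

variable {a p q : ℝ}

lemma exp_mul_exp_neg_abs_mul_exp_neg_abs_le {w x : ℝ} (hw : w ≤ 2 * a * distIcc p q x) :
    exp w * (exp (-2 * a * |x - p|) * exp (-2 * a * |x - q|)) ≤
      exp (-(2 * a) * distIcc p q x) * exp (-2 * a * (q - p)) := by
  simp only [← exp_add, exp_le_exp]
  calc w + (-2 * a * |x - p| + -2 * a * |x - q|)
      = w - 2 * a * (|x - p| + |x - q|) := by ring
    _ = w - 2 * a * ((q - p) + 2 * distIcc p q x) := by rw [abs_sub_add_abs_sub_eq]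
    _ ≤ -(2 * a) * distIcc p q x + -2 * a * (q - p) := by linarith

lemma tsum_exp_mul_exp_neg_abs_mul_exp_neg_abs_le {w : ℤ → ℝ} (ha : 0 < a) (hpq : p ≤ q)
    (hw : ∀ j : ℤ, w j ≤ 2 * a * distIcc p q j) :
    ∑' j : ℤ, exp (w j) * (exp (-2 * a * |(j : ℝ) - p|) * exp (-2 * a * |(j : ℝ) - q|)) ≤
      ((q - p) + 3 + 1 / a) * exp (-2 * a * (q - p)) := by
  have rate_pos : 0 < 2 * a := by positivity
  have term_le (j : ℤ) := exp_mul_exp_neg_abs_mul_exp_neg_abs_le (hw j)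
  have majorant_summable := (summable_exp_neg_mul_distIcc p q rate_pos).mul_right
    (exp (-2 * a * (q - p)))
  calc ∑' j : ℤ, exp (w j) * (exp (-2 * a * |(j : ℝ) - p|) * exp (-2 * a * |(j : ℝ) - q|))
      ≤ ∑' j : ℤ, exp (-(2 * a) * distIcc p q j) * exp (-2 * a * (q - p)) :=
        (majorant_summable.of_nonneg_of_le (fun _ ↦ by positivity) term_le).tsum_le_tsum
          term_le majorant_summable
    _ = (∑' j : ℤ, exp (-(2 * a) * distIcc p q j)) * exp (-2 * a * (q - p)) := tsum_mul_right
    _ ≤ ((q - p) + 3 + 2 / (2 * a)) * exp (-2 * a * (q - p)) := by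
        gcongr
        exact tsum_exp_neg_mul_distIcc_le rate_pos hpq
    _ = ((q - p) + 3 + 1 / a) * exp (-2 * a * (q - p)) := by field_simp

end Overlap

/-- Weighted overlap estimate for two exponentially localized profiles centered at
`p ≤ q`, with exponential weights `e^{2c(j-q)}` (resp. `e^{-2c(j-p)}`) whose rate `c`
does not exceed the localization rate `a`. -/
theorem weighted_exponential_overlap_estimate :
    ∃ C > (0 : ℝ), ∀ a ∈ Set.Ioc (0 : ℝ) 1, ∀ c : ℝ, 0 ≤ c → c ≤ a → ∀ p q : ℝ, p ≤ q →
      (∑' j : ℤ, Real.exp (2 * c * ((j : ℝ) - q)) *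
          (Real.exp (-2 * a * |(j : ℝ) - p|) * Real.exp (-2 * a * |(j : ℝ) - q|)))
        ≤ C * ((q - p) + 1 / a) * Real.exp (-2 * a * (q - p)) ∧
      (∑' j : ℤ, Real.exp (-2 * c * ((j : ℝ) - p)) *
          (Real.exp (-2 * a * |(j : ℝ) - p|) * Real.exp (-2 * a * |(j : ℝ) - q|)))
        ≤ C * ((q - p) + 1 / a) * Real.exp (-2 * a * (q - p)) := by
  refine ⟨4, by norm_num, fun a ⟨ha, ha_le_one⟩ c hc hca p q hpq ↦ ?_⟩
  have const_le : (q - p) + 3 + 1 / a ≤ 4 * ((q - p) + 1 / a) := by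
    linarith [one_le_one_div ha ha_le_one]
  have weighted_le {w : ℤ → ℝ} (hw : ∀ j : ℤ, w j ≤ 2 * a * distIcc p q j) :=
    (tsum_exp_mul_exp_neg_abs_mul_exp_neg_abs_le ha hpq hw).trans
      (mul_le_mul_of_nonneg_right const_le (exp_pos _).le)
  have rate_nonneg : 0 ≤ 2 * c := by positivity
  have rate_le : 2 * c ≤ 2 * a := by gcongr
  constructor
  · exact weighted_le fun j ↦ mul_le_mul_distIcc rate_nonneg rate_le (sub_right_le_distIcc p q j)
  · refine weighted_le fun j ↦ ?_
    calc -2 * c * ((j : ℝ) - p) = 2 * c * (p - j) := by ring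
      _ ≤ 2 * a * distIcc p q j :=
        mul_le_mul_distIcc rate_nonneg rate_le (left_sub_le_distIcc p q j)
end

section
/- Let a ∈ (0,1], let c₊, c₋ ∈ ℝ with |c₊| ≤ 2 and |c₋| ≤ 2, and let θ₊, θ₋ ∈ ℝ. Define three inner products on real sequences indexed by ℤ: ⟨x,y⟩ := Σ_j x_j y_j, ⟨x,y⟩₊ := Σ_j e^{2a(j−θ₊)} x_j y_j, and ⟨x,y⟩₋ := Σ_j e^{−2a(j−θ₋)} x_j y_j, with associated norms ‖·‖, ‖·‖₊, ‖·‖₋. Let ρ, π, g : ℤ → ℝ be sequences with finite norm in all three spaces, and set E := ½(‖ρ‖² + ‖ρ‖₊² + ‖ρ‖₋² + ‖π‖² + ‖π‖₊² + ‖π‖₋²). Then c₊·a·(‖ρ‖₊² + ‖π‖₊²) − c₋·a·(‖ρ‖₋² + ‖π‖₋²) + Σ_{⋄∈{ℓ²,+,−}} (⟨ρ,(S−I)π⟩_⋄ + ⟨π,(I−S⁻¹)ρ⟩_⋄ + ⟨π,g⟩_⋄) ≤ 16·a·E + Σ_{⋄∈{ℓ²,+,−}} ‖g‖_⋄·‖π‖_⋄.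 -/
/-- Unweighted `ℓ²(ℤ)` pairing `⟨x,y⟩ = Σ_j x_j y_j`. -/
noncomputable def ip0 (x y : ℤ → ℝ) : ℝ := ∑' j : ℤ, x j * y j

/-- Weighted pairing `⟨x,y⟩ = Σ_j e^{2a(j-θ)} x_j y_j`. -/
noncomputable def ipw (a θ : ℝ) (x y : ℤ → ℝ) : ℝ :=
  ∑' j : ℤ, Real.exp (2 * a * ((j : ℝ) - θ)) * (x j * y j)

/-- The operator `S - I`, where `(Sx)_j = x_{j+1}`. -/
def SmI (x : ℤ → ℝ) : ℤ → ℝ := fun j => x (j + 1) - x j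

/-- The operator `I - S⁻¹`, where `(S⁻¹x)_j = x_{j-1}`. -/
def ImSinv (x : ℤ → ℝ) : ℤ → ℝ := fun j => x j - x (j - 1)

/-!
Multiplying sequences by `e^{a(j-θ)}` turns the weighted pairing into the unweighted one, and the
shifts `S`, `S⁻¹` into `e^{-a} S`, `e^a S⁻¹`. As `S⁻¹` is the adjoint of `S`, the coupling of `ρ`
and `π` leaves only `-2 sinh a ⟨u, S v⟩`, where `u`, `v` are the rescaled `ρ`, `π`.
Cauchy–Schwarz bounds this by `sinh |a|` times the weighted energy `‖u‖² + ‖v‖²`; the unweighted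
pairing is the case `a = 0`, in which nothing remains.
-/

section SquareSummable

open Real

variable {ι : Type*} {u v : ι → ℝ}

lemma summable_mul_of_summable_sq (hu : Summable fun j => u j ^ 2)
    (hv : Summable fun j => v j ^ 2) : Summable fun j => u j * v j := by
  refine (hu.add hv).of_norm_bounded fun j => ?_
  have h := two_mul_le_add_sq |u j| |v j|
  rw [sq_abs, sq_abs] at h
  rw [norm_eq_abs, abs_mul]
  linarith [mul_nonneg (abs_nonneg (u j)) (abs_nonneg (v j))]

lemma sq_tsum_mul_le_tsum_sq_mul_tsum_sq (hu : Summable fun j => u j ^ 2)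
    (hv : Summable fun j => v j ^ 2) :
    (∑' j, u j * v j) ^ 2 ≤ (∑' j, u j ^ 2) * ∑' j, v j ^ 2 :=
  le_of_tendsto_of_tendsto' ((summable_mul_of_summable_sq hu hv).hasSum.pow 2)
    (Filter.Tendsto.mul hu.hasSum hv.hasSum) fun s => s.sum_mul_sq_le_sq_mul_sq u v

lemma abs_tsum_mul_le_sqrt_mul_sqrt (hu : Summable fun j => u j ^ 2)
    (hv : Summable fun j => v j ^ 2) :
    |∑' j, u j * v j| ≤ √(∑' j, u j ^ 2) * √(∑' j, v j ^ 2) :=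
  (abs_le_sqrt (sq_tsum_mul_le_tsum_sq_mul_tsum_sq hu hv)).trans_eq
    (sqrt_mul (tsum_nonneg fun _ => sq_nonneg _) _)

lemma two_mul_abs_tsum_mul_le (hu : Summable fun j => u j ^ 2) (hv : Summable fun j => v j ^ 2) :
    2 * |∑' j, u j * v j| ≤ ∑' j, u j ^ 2 + ∑' j, v j ^ 2 := by
  have hcs := abs_tsum_mul_le_sqrt_mul_sqrt hu hv
  have hamgm := two_mul_le_add_sq √(∑' j, u j ^ 2) √(∑' j, v j ^ 2)
  rw [sq_sqrt (tsum_nonneg fun _ => sq_nonneg _), sq_sqrt (tsum_nonneg fun _ => sq_nonneg _)]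
    at hamgm
  linarith

end SquareSummable

section Shift

variable {M : Type*} [AddCommMonoid M] [TopologicalSpace M]

lemma summable_add_one {f : ℤ → M} (hf : Summable f) : Summable fun j => f (j + 1) :=
  (Equiv.addRight (1 : ℤ)).summable_iff.mpr hf

lemma tsum_add_one (f : ℤ → M) : ∑' j, f (j + 1) = ∑' j, f j :=
  (Equiv.addRight (1 : ℤ)).tsum_eq f

end Shift

section Weighted

open Real

/-- The sequence `e^{a(j-θ)} x_j`, whose unweighted norm is the weighted norm of `x`; the exponent
is half of the one in `ipw`. -/
noncomputable def expWeight (a θ : ℝ) (x : ℤ → ℝ) : ℤ → ℝ := fun j => exp (a * (j - θ)) * x j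

variable {a θ : ℝ} {x y : ℤ → ℝ}

lemma expWeight_mul_expWeight (a θ : ℝ) (x y : ℤ → ℝ) (j : ℤ) :
    expWeight a θ x j * expWeight a θ y j = exp (2 * a * (j - θ)) * (x j * y j) := by
  rw [expWeight, expWeight, mul_mul_mul_comm, ← exp_add]
  ring_nf

lemma expWeight_sq (a θ : ℝ) (x : ℤ → ℝ) (j : ℤ) :
    expWeight a θ x j ^ 2 = exp (2 * a * (j - θ)) * x j ^ 2 := by
  rw [sq, sq, expWeight_mul_expWeight]

lemma expWeight_zero (θ : ℝ) (x : ℤ → ℝ) : expWeight 0 θ x = x := by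
  ext j
  simp [expWeight]

lemma ipw_eq_ip0_expWeight (a θ : ℝ) (x y : ℤ → ℝ) :
    ipw a θ x y = ip0 (expWeight a θ x) (expWeight a θ y) :=
  tsum_congr fun j => (expWeight_mul_expWeight a θ x y j).symm

lemma ip0_eq_ipw_zero (x y : ℤ → ℝ) : ip0 x y = ipw 0 0 x y := by
  rw [ipw_eq_ip0_expWeight, expWeight_zero, expWeight_zero]

lemma ipw_self_eq_tsum_sq (a θ : ℝ) (x : ℤ → ℝ) :
    ipw a θ x x = ∑' j, expWeight a θ x j ^ 2 := by
  simp only [ipw_eq_ip0_expWeight, ip0, sq]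

lemma ipw_self_nonneg (a θ : ℝ) (x : ℤ → ℝ) : 0 ≤ ipw a θ x x := by
  rw [ipw_self_eq_tsum_sq]
  exact tsum_nonneg fun _ => sq_nonneg _

lemma expWeight_add_one (a θ : ℝ) (x : ℤ → ℝ) (j : ℤ) :
    expWeight a θ x (j + 1) = exp a * (exp (a * (j - θ)) * x (j + 1)) := by
  rw [expWeight, ← mul_assoc, ← exp_add]
  push_cast
  ring_nf

lemma expWeight_SmI (a θ : ℝ) (x : ℤ → ℝ) (j : ℤ) :
    expWeight a θ (SmI x) j = exp (-a) * expWeight a θ x (j + 1) - expWeight a θ x j := by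
  rw [expWeight_add_one, ← mul_assoc, ← exp_add, neg_add_cancel, exp_zero, one_mul, expWeight,
    expWeight, SmI, mul_sub]

lemma expWeight_ImSinv_add_one (a θ : ℝ) (x : ℤ → ℝ) (j : ℤ) :
    expWeight a θ (ImSinv x) (j + 1) = expWeight a θ x (j + 1) - exp a * expWeight a θ x j := by
  rw [expWeight_add_one, expWeight_add_one, ImSinv, add_sub_cancel_right, expWeight]
  ring

lemma ipw_le_sqrt_mul_sqrt (hx : Summable fun j => expWeight a θ x j ^ 2)
    (hy : Summable fun j => expWeight a θ y j ^ 2) :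
    ipw a θ x y ≤ √(ipw a θ x x) * √(ipw a θ y y) := by
  rw [ipw_self_eq_tsum_sq, ipw_self_eq_tsum_sq, ipw_eq_ip0_expWeight]
  exact (le_abs_self _).trans (abs_tsum_mul_le_sqrt_mul_sqrt hx hy)

lemma ipw_SmI (hx : Summable fun j => expWeight a θ x j ^ 2)
    (hy : Summable fun j => expWeight a θ y j ^ 2) :
    ipw a θ x (SmI y)
      = exp (-a) * ip0 (expWeight a θ x) (fun j => expWeight a θ y (j + 1)) - ipw a θ x y := by
  have hshift := summable_mul_of_summable_sq hx (summable_add_one hy)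
  have hdiag := summable_mul_of_summable_sq hx hy
  simp only [ipw_eq_ip0_expWeight, ip0, expWeight_SmI, mul_sub, mul_left_comm _ (exp (-a))]
  rw [(hshift.mul_left _).tsum_sub hdiag, tsum_mul_left]

lemma ipw_ImSinv (hx : Summable fun j => expWeight a θ x j ^ 2)
    (hy : Summable fun j => expWeight a θ y j ^ 2) :
    ipw a θ y (ImSinv x)
      = ipw a θ x y - exp a * ip0 (expWeight a θ x) (fun j => expWeight a θ y (j + 1)) := by
  have hshift := summable_mul_of_summable_sq hx (summable_add_one hy)
  have hdiag := summable_add_one (summable_mul_of_summable_sq hx hy)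
  calc ipw a θ y (ImSinv x)
      = ∑' j, expWeight a θ y (j + 1) * expWeight a θ (ImSinv x) (j + 1) := by
        rw [ipw_eq_ip0_expWeight, ip0, ← tsum_add_one]
    _ = ∑' j, (expWeight a θ x (j + 1) * expWeight a θ y (j + 1)
          - exp a * (expWeight a θ x j * expWeight a θ y (j + 1))) :=
        tsum_congr fun j => by rw [expWeight_ImSinv_add_one]; ring
    _ = ipw a θ x y - exp a * ip0 (expWeight a θ x) (fun j => expWeight a θ y (j + 1)) := by
        rw [ipw_eq_ip0_expWeight, ip0, ip0, hdiag.tsum_sub (hshift.mul_left _), tsum_mul_left,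
          tsum_add_one fun j => expWeight a θ x j * expWeight a θ y j]

lemma ipw_SmI_add_ipw_ImSinv (hx : Summable fun j => expWeight a θ x j ^ 2)
    (hy : Summable fun j => expWeight a θ y j ^ 2) :
    ipw a θ x (SmI y) + ipw a θ y (ImSinv x)
      = -sinh a * (2 * ip0 (expWeight a θ x) (fun j => expWeight a θ y (j + 1))) := by
  rw [ipw_SmI hx hy, ipw_ImSinv hx hy, sinh_eq]
  ring

lemma two_mul_abs_ip0_expWeight_shift_le (hx : Summable fun j => expWeight a θ x j ^ 2)
    (hy : Summable fun j => expWeight a θ y j ^ 2) :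
    2 * |ip0 (expWeight a θ x) (fun j => expWeight a θ y (j + 1))|
      ≤ ipw a θ x x + ipw a θ y y := by
  rw [ipw_self_eq_tsum_sq, ipw_self_eq_tsum_sq, ← tsum_add_one fun j => expWeight a θ y j ^ 2]
  exact two_mul_abs_tsum_mul_le hx (summable_add_one hy)

lemma ipw_SmI_add_ipw_ImSinv_le (hx : Summable fun j => expWeight a θ x j ^ 2)
    (hy : Summable fun j => expWeight a θ y j ^ 2) :
    ipw a θ x (SmI y) + ipw a θ y (ImSinv x) ≤ sinh |a| * (ipw a θ x x + ipw a θ y y) := by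
  rw [ipw_SmI_add_ipw_ImSinv hx hy, ← abs_sinh]
  refine (le_abs_self _).trans ?_
  rw [abs_mul, abs_neg, abs_mul, abs_two]
  gcongr
  exact two_mul_abs_ip0_expWeight_shift_le hx hy

lemma weighted_energy_derivative_le {z : ℤ → ℝ} {c K : ℝ} (hK : c * a + sinh |a| ≤ K)
    (hx : Summable fun j => expWeight a θ x j ^ 2) (hy : Summable fun j => expWeight a θ y j ^ 2)
    (hz : Summable fun j => expWeight a θ z j ^ 2) :
    c * a * (ipw a θ x x + ipw a θ y y)
        + (ipw a θ x (SmI y) + ipw a θ y (ImSinv x) + ipw a θ y z)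
      ≤ K * (ipw a θ x x + ipw a θ y y) + √(ipw a θ z z) * √(ipw a θ y y) := by
  have hcoupling := ipw_SmI_add_ipw_ImSinv_le hx hy
  have hforcing := ipw_le_sqrt_mul_sqrt hy hz
  have hrate := mul_le_mul_of_nonneg_right hK
    (add_nonneg (ipw_self_nonneg a θ x) (ipw_self_nonneg a θ y))
  linarith

end Weighted

section SinhBound

open Real

lemma sinh_le_two_mul {x : ℝ} (hx₀ : 0 ≤ x) (hx₁ : x ≤ 1) : sinh x ≤ 2 * x := by
  have hpos := abs_exp_sub_one_le (x := x) (by rwa [abs_of_nonneg hx₀])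
  have hneg := abs_exp_sub_one_le (x := -x) (by rwa [abs_neg, abs_of_nonneg hx₀])
  rw [abs_neg] at hneg
  rw [abs_of_nonneg hx₀] at hpos hneg
  rw [sinh_eq]
  linarith [(abs_le.mp hpos).2, (abs_le.mp hneg).1]

lemma mul_add_sinh_abs_le {a c : ℝ} (ha : a ∈ Set.Ioc (0 : ℝ) 1) (hc : c ≤ 6) :
    c * a + sinh |a| ≤ 8 * a := by
  rw [abs_of_pos ha.1]
  linarith [sinh_le_two_mul ha.1.le ha.2, mul_le_mul_of_nonneg_right hc ha.1.le]

end SinhBound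

theorem energy_derivative_estimate_general
    (a cp cm θp θm K : ℝ) (hK : 0 ≤ K)
    (hcp : cp * a + Real.sinh |a| ≤ K) (hcm : -cm * a + Real.sinh |a| ≤ K)
    (ρ π g : ℤ → ℝ)
    (hsum : ∀ x ∈ ({ρ, π, g} : Set (ℤ → ℝ)),
      (Summable fun j : ℤ => (x j) ^ 2) ∧
      (Summable fun j : ℤ => Real.exp (2 * a * ((j : ℝ) - θp)) * (x j) ^ 2) ∧
      (Summable fun j : ℤ => Real.exp (-(2 * a) * ((j : ℝ) - θm)) * (x j) ^ 2)) :
    cp * a * (ipw a θp ρ ρ + ipw a θp π π)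
      - cm * a * (ipw (-a) θm ρ ρ + ipw (-a) θm π π)
      + (ip0 ρ (SmI π) + ip0 π (ImSinv ρ) + ip0 π g)
      + (ipw a θp ρ (SmI π) + ipw a θp π (ImSinv ρ) + ipw a θp π g)
      + (ipw (-a) θm ρ (SmI π) + ipw (-a) θm π (ImSinv ρ) + ipw (-a) θm π g)
    ≤ 2 * K * ((1 / 2) * (ip0 ρ ρ + ipw a θp ρ ρ + ipw (-a) θm ρ ρ
          + ip0 π π + ipw a θp π π + ipw (-a) θm π π))
      + (Real.sqrt (ip0 g g) * Real.sqrt (ip0 π π)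
          + Real.sqrt (ipw a θp g g) * Real.sqrt (ipw a θp π π)
          + Real.sqrt (ipw (-a) θm g g) * Real.sqrt (ipw (-a) θm π π)) := by
  simp only [← mul_neg, ← expWeight_sq] at hsum
  obtain ⟨hρ₀, hρp, hρm⟩ := hsum ρ (by simp)
  obtain ⟨hπ₀, hπp, hπm⟩ := hsum π (by simp)
  obtain ⟨hg₀, hgp, hgm⟩ := hsum g (by simp)
  rw [← expWeight_zero 0 ρ] at hρ₀
  rw [← expWeight_zero 0 π] at hπ₀
  rw [← expWeight_zero 0 g] at hg₀
  have hunweighted := weighted_energy_derivative_le (c := 0) (by simpa using hK) hρ₀ hπ₀ hg₀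
  have hplus := weighted_energy_derivative_le hcp hρp hπp hgp
  have hminus := weighted_energy_derivative_le (c := cm) (by simpa using hcm) hρm hπm hgm
  simp only [ip0_eq_ipw_zero]
  linarith

/-- Fixed-time estimate for the derivative of the energy functional of the driven
discrete wave equation `ρ̇ = (S−I)π`, `π̇ = (I−S⁻¹)ρ + g`, computed simultaneously in
the unweighted `ℓ²(ℤ)` pairing and the two exponentially weighted pairings centered
at `θ₊` and `θ₋`. -/
theorem energy_derivative_estimate
    (a : ℝ) (ha : a ∈ Set.Ioc (0 : ℝ) 1) (cp cm θp θm : ℝ)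
    (hcp : |cp| ≤ 2) (hcm : |cm| ≤ 2)
    (ρ π g : ℤ → ℝ)
    (hsum : ∀ x ∈ ({ρ, π, g} : Set (ℤ → ℝ)),
      (Summable fun j : ℤ => (x j) ^ 2) ∧
      (Summable fun j : ℤ => Real.exp (2 * a * ((j : ℝ) - θp)) * (x j) ^ 2) ∧
      (Summable fun j : ℤ => Real.exp (-(2 * a) * ((j : ℝ) - θm)) * (x j) ^ 2)) :
    cp * a * (ipw a θp ρ ρ + ipw a θp π π)
      - cm * a * (ipw (-a) θm ρ ρ + ipw (-a) θm π π)
      + (ip0 ρ (SmI π) + ip0 π (ImSinv ρ) + ip0 π g)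
      + (ipw a θp ρ (SmI π) + ipw a θp π (ImSinv ρ) + ipw a θp π g)
      + (ipw (-a) θm ρ (SmI π) + ipw (-a) θm π (ImSinv ρ) + ipw (-a) θm π g)
    ≤ 16 * a * ((1 / 2) * (ip0 ρ ρ + ipw a θp ρ ρ + ipw (-a) θm ρ ρ
          + ip0 π π + ipw a θp π π + ipw (-a) θm π π))
      + (Real.sqrt (ip0 g g) * Real.sqrt (ip0 π π)
          + Real.sqrt (ipw a θp g g) * Real.sqrt (ipw a θp π π)
          + Real.sqrt (ipw (-a) θm g g) * Real.sqrt (ipw (-a) θm π π)) := by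
  linarith [energy_derivative_estimate_general a cp cm θp θm (8 * a) (by linarith [ha.1])
    (mul_add_sinh_abs_le ha (by linarith [(abs_le.mp hcp).2]))
    (mul_add_sinh_abs_le ha (by linarith [(abs_le.mp hcm).1])) ρ π g hsum]
end
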